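/- arXiv:2403.04271 — 2 statements merged into one kernel-verified Lean document; each statement's English description precedes it below -/
import Mathlib

section
/- Let ℬ be an abelian category and let S : 0 → A → B → C → 0 be a short exact sequence. Let A' and C' be objects of ℬ each of which is a subquotient of a finite biproduct of copies of B. Suppose S' : 0 → A' → B' → C' → 0 is a short exact sequence whose extension class satisfies extClass(S') = Σ_{i=1}^{k} (ψ_i)^*((φ_i)_*(extClass(S))) in Ext¹(C', A') for some morphisms φ₁, …, φ_k : A → A' and ψ₁, …, ψ_k : C' → C. Then the middle object B' is itself a subquotient of a finite biproduct of copies of B. -/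
universe w v u

open CategoryTheory CategoryTheory.Limits CategoryTheory.Abelian

attribute [local instance] CategoryTheory.Abelian.hasFiniteBiproducts

/-- `Y` is a subquotient of a finite biproduct of copies of `X`: there are `n : ℕ`, an
object `D`, a monomorphism `D ⟶ X^{⊕n}` and an epimorphism `D ⟶ Y`. -/
def IsSubquotientOfFinitePower {ℬ : Type*} [Category ℬ] [Abelian ℬ] (Y X : ℬ) : Prop :=
  ∃ (n : ℕ) (D : ℬ) (m : D ⟶ ⨁ (fun _ : Fin n => X)), Mono m ∧ ∃ e : D ⟶ Y, Epi e

/-!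
By the long exact sequence of `Ext`, an extension class is killed by pullback along `p` exactly
when `p` lifts to the middle object. The fibre product `P` of `C'` with copies of `B` over copies
of `C` is a subobject of `C' ⊞ B^{⊕k}`, maps onto `C'`, and lifts every `ψᵢ` to `B`; hence the
class of `S'` vanishes on `P`, so `P ⟶ C'` lifts to `P ⟶ B'`, and `A' ⊞ P ⟶ B'` is an epimorphism.
-/

section

variable {ℬ : Type u} [Category.{v} ℬ] [Abelian ℬ]

lemma mk₀_comp_extClass_eq_zero_iff [HasExt.{w} ℬ] {S : ShortComplex ℬ} (hS : S.ShortExact)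
    {X : ℬ} (p : X ⟶ S.X₃) :
    (Ext.mk₀ p).comp hS.extClass (zero_add 1) = 0 ↔ ∃ t : X ⟶ S.X₂, t ≫ S.g = p := by
  refine ⟨fun h ↦ ?_, ?_⟩
  · obtain ⟨x, hx⟩ := Ext.covariant_sequence_exact₃ X hS (Ext.mk₀ p) (zero_add 1) h
    obtain ⟨t, rfl⟩ := (Ext.mk₀_bijective X S.X₂).surjective x
    exact ⟨t, (Ext.mk₀_bijective X S.X₃).injective (by rw [← Ext.mk₀_comp_mk₀, hx])⟩
  · rintro ⟨t, rfl⟩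
    rw [← Ext.mk₀_comp_mk₀_assoc, hS.comp_extClass, Ext.comp_zero]

lemma epi_biprod_desc_of_epi_comp {S : ShortComplex ℬ} (hS : S.Exact) {X : ℬ} (t : X ⟶ S.X₂)
    [Epi (t ≫ S.g)] : Epi (biprod.desc S.f t) := by
  have : Epi S.g := epi_of_epi t S.g
  let φ : ShortComplex.mk (biprod.inl : S.X₁ ⟶ S.X₁ ⊞ X) biprod.snd biprod.inl_snd ⟶ S :=
    { τ₁ := 𝟙 _
      τ₂ := biprod.desc S.f t
      τ₃ := t ≫ S.g }
  have : Epi φ.τ₁ := inferInstanceAs (Epi (𝟙 S.X₁))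
  have : Epi φ.τ₃ := inferInstanceAs (Epi (t ≫ S.g))
  exact ShortComplex.epi_τ₂_of_exact_of_epi φ hS

namespace IsSubquotientOfFinitePower

lemma of_mono_of_epi {ι : Type*} [Finite ι] {X D Y : ℬ} (m : D ⟶ ⨁ fun _ : ι ↦ X) [Mono m]
    (e : D ⟶ Y) [Epi e] : IsSubquotientOfFinitePower Y X := by
  obtain ⟨n, ⟨σ⟩⟩ := Finite.exists_equiv_fin ι
  exact ⟨n, D, m ≫ (biproduct.whiskerEquiv σ fun _ ↦ Iso.refl X).hom, inferInstance,
    e, inferInstance⟩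

lemma refl (X : ℬ) : IsSubquotientOfFinitePower X X :=
  of_mono_of_epi (biproduct.ι (fun _ : Unit ↦ X) ()) (𝟙 X)

protected lemma biproduct {ι : Type*} [Finite ι] {Y : ι → ℬ} {X : ℬ}
    (h : ∀ i, IsSubquotientOfFinitePower (Y i) X) : IsSubquotientOfFinitePower (⨁ Y) X := by
  choose n D m hm e he using h
  exact of_mono_of_epi
    (biproduct.map m ≫ (biproductBiproductIso (fun i ↦ Fin (n i)) fun _ _ ↦ X).hom)
    (biproduct.map e)

end IsSubquotientOfFinitePower

/-- The full subcategory `⟨X⟩` of subquotients of finite biproducts of copies of `X`, as an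
`ObjectProperty`, so that its closure properties can be found by instance resolution. -/
def subquotientsOfFinitePowers (X : ℬ) : ObjectProperty ℬ :=
  fun Y ↦ IsSubquotientOfFinitePower Y X

instance (X : ℬ) : (subquotientsOfFinitePowers X).IsClosedUnderQuotients where
  prop_of_epi := by
    rintro Y Z f _ ⟨n, D, m, _, e, _⟩
    exact .of_mono_of_epi m (e ≫ f)

instance (X : ℬ) : (subquotientsOfFinitePowers X).IsClosedUnderSubobjects where
  prop_of_mono := by
    rintro Y Z f _ ⟨n, D, m, _, e, _⟩
    exact .of_mono_of_epi (pullback.fst e f ≫ m) (pullback.snd e f)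

instance (X : ℬ) : (subquotientsOfFinitePowers X).IsClosedUnderFiniteProducts where
  isClosedUnderLimitsOfShape ι _ :=
    { limitsOfShape_le := by
        rintro Y ⟨h⟩
        let Z : ι → ℬ := fun i ↦ h.diag.obj ⟨i⟩
        let α : Y ⟶ ⨁ Z := biproduct.lift fun i ↦ h.π.app ⟨i⟩
        have : Mono α := ⟨fun a b hab ↦ h.isLimit.hom_ext fun ⟨i⟩ ↦ by
          simpa [α] using hab =≫ biproduct.π Z i⟩
        exact (subquotientsOfFinitePowers X).prop_of_mono α
          (IsSubquotientOfFinitePower.biproduct fun i ↦ h.prop_diag_obj ⟨i⟩) }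

variable (P : ObjectProperty ℬ)

lemma prop_X₂_of_mk₀_comp_extClass_eq_zero [HasExt.{w} ℬ] [P.IsClosedUnderBinaryProducts]
    [P.IsClosedUnderQuotients] {S : ShortComplex ℬ} (hS : S.ShortExact) (h₁ : P S.X₁)
    {X : ℬ} (hX : P X) (p : X ⟶ S.X₃) [Epi p]
    (hp : (Ext.mk₀ p).comp hS.extClass (zero_add 1) = 0) :
    P S.X₂ := by
  obtain ⟨t, rfl⟩ := (mk₀_comp_extClass_eq_zero_iff hS p).1 hp
  have := epi_biprod_desc_of_epi_comp hS.exact t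
  exact P.prop_of_epi (biprod.desc S.f t)
    (P.prop_of_isLimit_binaryFan (BinaryBiproduct.isLimit _ _) h₁ hX)

lemma exists_epi_forall_exists_lift [P.IsClosedUnderFiniteProducts] [P.IsClosedUnderSubobjects]
    {ι : Type*} [Finite ι] {B C : ι → ℬ} (g : ∀ i, B i ⟶ C i) [∀ i, Epi (g i)]
    {Y : ℬ} (ψ : ∀ i, Y ⟶ C i) (hB : ∀ i, P (B i)) (hY : P Y) :
    ∃ (X : ℬ) (p : X ⟶ Y), P X ∧ Epi p ∧ ∀ i, ∃ q : X ⟶ B i, q ≫ g i = p ≫ ψ i := by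
  let a : Y ⟶ ⨁ C := biproduct.lift ψ
  let b : ⨁ B ⟶ ⨁ C := biproduct.map g
  have hprod : P (Y ⨯ ⨁ B) :=
    P.prop_prod _ _ hY (P.prop_of_isLimit_fan (biproduct.isLimit B) hB)
  refine ⟨pullback a b, pullback.fst a b,
    P.prop_of_mono (prod.lift (pullback.fst a b) (pullback.snd a b)) hprod,
    inferInstance, fun i ↦ ⟨pullback.snd a b ≫ biproduct.π B i, ?_⟩⟩
  simpa [a, b] using (pullback.condition (f := a) (g := b) =≫ biproduct.π C i).symm

theorem middle_isSubquotientOfFinitePower_of_extClass_eq_sum_general [HasExt.{w} ℬ]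
    [P.IsClosedUnderFiniteProducts] [P.IsClosedUnderSubobjects] [P.IsClosedUnderQuotients]
    {ι : Type*} [Fintype ι] {S : ι → ShortComplex ℬ} {S' : ShortComplex ℬ}
    (hS : ∀ i, (S i).ShortExact) (hS' : S'.ShortExact)
    (hB : ∀ i, P (S i).X₂) (hA' : P S'.X₁) (hC' : P S'.X₃)
    (φ : ∀ i, (S i).X₁ ⟶ S'.X₁) (ψ : ∀ i, S'.X₃ ⟶ (S i).X₃)
    (hclass : hS'.extClass = ∑ i, (Ext.mk₀ (ψ i)).comp
      ((hS i).extClass.comp (Ext.mk₀ (φ i)) (add_zero 1)) (zero_add 1)) :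
    P S'.X₂ := by
  have (i : ι) : Epi (S i).g := (hS i).epi_g
  obtain ⟨X, p, hX, _, hlift⟩ := exists_epi_forall_exists_lift P (fun i ↦ (S i).g) ψ hB hC'
  refine prop_X₂_of_mk₀_comp_extClass_eq_zero P hS' hA' hX p ?_
  rw [hclass, Ext.comp_sum]
  refine Finset.sum_eq_zero fun i _ ↦ ?_
  have hzero : (Ext.mk₀ (p ≫ ψ i)).comp (hS i).extClass (zero_add 1) = 0 :=
    (mk₀_comp_extClass_eq_zero_iff (hS i) _).2 (hlift i)
  rw [Ext.mk₀_comp_mk₀_assoc, ← Ext.comp_assoc_of_third_deg_zero, hzero, Ext.zero_comp]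

end

/-- The subcategory of subquotients of finite direct sums of copies of `B` is closed under
extensions whose class is a sum of pullback-pushouts of the class of
`S : 0 → A → B → C → 0`: if `A'` and `C'` are subquotients of finite biproducts of copies
of `B` and `S' : 0 → A' → B' → C' → 0` has extension class `∑ᵢ ψᵢ^* (φᵢ)_* (extClass S)`,
then `B'` is a subquotient of a finite biproduct of copies of `B` as well. -/
theorem middle_isSubquotientOfFinitePower_of_extClass_eq_sum
    {ℬ : Type u} [Category.{v} ℬ] [Abelian ℬ] [HasExt.{w} ℬ]
    {S S' : ShortComplex ℬ} (hS : S.ShortExact) (hS' : S'.ShortExact)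
    (hA' : IsSubquotientOfFinitePower S'.X₁ S.X₂)
    (hC' : IsSubquotientOfFinitePower S'.X₃ S.X₂)
    (k : ℕ) (φ : Fin k → (S.X₁ ⟶ S'.X₁)) (ψ : Fin k → (S'.X₃ ⟶ S.X₃))
    (hclass : hS'.extClass = ∑ i : Fin k,
      (Ext.mk₀ (ψ i)).comp ((hS.extClass).comp (Ext.mk₀ (φ i)) (add_zero 1)) (zero_add 1)) :
    IsSubquotientOfFinitePower S'.X₂ S.X₂ :=
  middle_isSubquotientOfFinitePower_of_extClass_eq_sum_general
    (subquotientsOfFinitePowers S.X₂) (fun _ ↦ hS) hS' (fun _ ↦ .refl S.X₂) hA' hC' φ ψ hclass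
end

section
/- Let α₁, …, αₙ be nonzero algebraic complex numbers (nonzero elements of ℂ that are algebraic over ℚ). Let ℚ̄ denote the subfield of ℂ consisting of all complex numbers algebraic over ℚ, and regard ℂ as a ℚ̄-vector space. Then the ℚ̄-dimension of the ℚ̄-linear span of {2πi, log α₁, …, log αₙ} in ℂ, minus 1, equals the rank of the multiplicative subgroup of ℂˣ generated by α₁, …, αₙ (i.e. the ℚ-dimension of that finitely generated abelian group tensored with ℚ). Here log denotes any fixed branch of the complex logarithm, e.g. the principal branch. -/
open TensorProduct

/-!
Let `l` be a family of `ℚ`-linearly independent logarithms of algebraic numbers, and suppose that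
`∑ j, β j * l j = 0` for coefficients `β j` in a number field `K ⊆ ℂ` of degree `d`. Conjugating
the coefficients gives forms `w σ = ∑ j, σ (β j) * l j`, one for every embedding `σ`, and
`∑ σ, w σ * σ y = ∑ j, Tr (y * β j) • l j` is again a logarithm of an algebraic number for every
`y` in `K`. Taking for `y` the products `ω j * ω i` of the elements of an integral basis yields `d`
vectors in `ℂ ^ d` whose entries are logarithms of algebraic numbers and which span the same space
as the algebraic vectors `x σ = (σ (ω i))_i` with `w σ ≠ 0`. If `β ≠ 0`, then `w` is not identically
zero, but `w` vanishes at the inclusion `K ⊆ ℂ`, so the space is spanned by between `1` and `d - 1`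
vectors `x σ`.

This is contradicted by an interpolation argument on such a space. Siegel's lemma provides an
exponential polynomial `z ↦ ∑ ξ l * exp ⟨l, z⟩` with `L ^ d` terms whose derivatives of order less
than `T` in the directions `x σ` vanish at the `H ^ d` points `∑ j, h j • Φ j`, where `Φ` are the
vectors of logarithms. With fewer than `d` directions, `T` may be taken much larger than `L`. The
first nonvanishing derivative at one of these points is an algebraic number which the Schwarz lemma
makes too small for its norm to be at least `1`.

Hence the dimension over `ℚ̄` of a space spanned by logarithms of algebraic numbers is the rank of
the group they generate, and the exponential maps the group generated by `2πi` and logarithms of the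
`α i` onto the group generated by the `α i`, with kernel `ℤ 2πi`.
-/

namespace Baker

section Schwarz

lemma differentiable_dslope {g : ℂ → ℂ} (hg : Differentiable ℂ g) (a : ℂ) :
    Differentiable ℂ (dslope g a) :=
  differentiableOn_univ.1 <|
    (Complex.differentiableOn_dslope Filter.univ_mem).2 hg.differentiableOn

lemma analyticOrderAt_eq_add_dslope {g : ℂ → ℂ} (hg : Differentiable ℂ g) {a : ℂ} (ha : g a = 0)
    (b : ℂ) :
    analyticOrderAt g b = analyticOrderAt (fun z ↦ z - a) b + analyticOrderAt (dslope g a) b := by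
  rw [← analyticOrderAt_mul (by fun_prop) ((differentiable_dslope hg a).analyticAt b)]
  congr 1
  ext z
  simpa [ha] using (sub_smul_dslope g a z).symm

lemma count_le_analyticOrderAt_dslope {g : ℂ → ℂ} (hg : Differentiable ℂ g) {a : ℂ}
    (ha : g a = 0) {s : Multiset ℂ} {b : ℂ}
    (hs : ((a ::ₘ s).count b : ℕ∞) ≤ analyticOrderAt g b) :
    (s.count b : ℕ∞) ≤ analyticOrderAt (dslope g a) b := by
  rw [analyticOrderAt_eq_add_dslope hg ha b] at hs
  obtain rfl | hab := eq_or_ne b a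
  · have hone : analyticOrderAt (fun z ↦ z - b) b = 1 :=
      AnalyticAt.analyticOrderAt_eq_one_of_zero_deriv_ne_zero (by fun_prop) (by simp) (by simp)
    rw [hone, Multiset.count_cons_self, Nat.cast_add, Nat.cast_one, add_comm] at hs
    exact (ENat.add_le_add_iff_left ENat.one_ne_top).1 hs
  · have hzero : analyticOrderAt (fun z ↦ z - a) b = 0 :=
      analyticOrderAt_eq_zero.2 (Or.inr (sub_ne_zero.2 hab))
    rwa [hzero, Multiset.count_cons_of_ne hab, zero_add] at hs

lemma exists_eq_prod_sub_mul (s : Multiset ℂ) {g : ℂ → ℂ} (hg : Differentiable ℂ g)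
    (hs : ∀ a, (s.count a : ℕ∞) ≤ analyticOrderAt g a) :
    ∃ G : ℂ → ℂ, Differentiable ℂ G ∧ ∀ z, g z = (s.map (z - ·)).prod * G z := by
  induction s using Multiset.induction_on generalizing g with
  | empty => exact ⟨g, hg, by simp⟩
  | cons a s ih =>
    have ha : g a = 0 := by
      refine apply_eq_zero_of_analyticOrderAt_ne_zero fun h ↦ ?_
      simpa [h] using hs a
    obtain ⟨G, hG, hgG⟩ := ih (differentiable_dslope hg a)
      fun b ↦ count_le_analyticOrderAt_dslope hg ha (hs b)
    refine ⟨G, hG, fun z ↦ ?_⟩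
    have hslope : g z = (z - a) * dslope g a z := by
      simpa [ha] using (sub_smul_dslope g a z).symm
    rw [hslope, hgG z, Multiset.map_cons, Multiset.prod_cons, mul_assoc]

lemma norm_multisetProd_map {ι : Type*} (s : Multiset ι) (f : ι → ℂ) :
    ‖(s.map f).prod‖ = (s.map (‖f ·‖)).prod :=
  (map_multiset_prod (normHom : ℂ →*₀ ℝ) _).trans (by simp)

lemma norm_multisetProd_map_le {ι : Type*} {s : Multiset ι} {f : ι → ℂ} {ρ : ℝ}
    (hρ : ∀ i ∈ s, ‖f i‖ ≤ ρ) : ‖(s.map f).prod‖ ≤ ρ ^ s.card := by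
  rw [norm_multisetProd_map, ← Multiset.prod_replicate, ← Multiset.map_const']
  exact Multiset.prod_map_le_prod_map₀ _ _ (fun i _ ↦ norm_nonneg (f i)) hρ

lemma pow_card_le_norm_multisetProd_map {ι : Type*} {s : Multiset ι} {f : ι → ℂ} {r : ℝ}
    (hr : 0 ≤ r) (hs : ∀ i ∈ s, r ≤ ‖f i‖) : r ^ s.card ≤ ‖(s.map f).prod‖ := by
  rw [norm_multisetProd_map, ← Multiset.prod_replicate, ← Multiset.map_const']
  exact Multiset.prod_map_le_prod_map₀ _ _ (fun _ _ ↦ hr) hs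

/-- Dividing out the zeros leaves an entire function, which the maximum principle bounds by its
values on the circle of radius `R`. -/
lemma norm_le_of_count_le_analyticOrderAt {s : Multiset ℂ} {g : ℂ → ℂ} (hg : Differentiable ℂ g)
    (hs : ∀ a, (s.count a : ℕ∞) ≤ analyticOrderAt g a) {R M ρ : ℝ} (hR : 0 < R)
    (hsR : ∀ a ∈ s, ‖a‖ ≤ R / 2) (hM : ∀ z, ‖z‖ = R → ‖g z‖ ≤ M) {z : ℂ} (hz : ‖z‖ ≤ R)
    (hρ : ∀ a ∈ s, ‖z - a‖ ≤ ρ) :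
    ‖g z‖ ≤ (2 * ρ / R) ^ s.card * M := by
  obtain ⟨G, hG, hgG⟩ := exists_eq_prod_sub_mul s hg hs
  have hcircle (w : ℂ) (hw : ‖w‖ = R) : ‖G w‖ ≤ M / (R / 2) ^ s.card := by
    have hfactor (a : ℂ) (ha : a ∈ s) : R / 2 ≤ ‖w - a‖ := by
      linarith [norm_sub_norm_le w a, hsR a ha]
    rw [le_div_iff₀ (by positivity), mul_comm]
    refine le_trans ?_ (hM w hw)
    rw [hgG, norm_mul]
    gcongr
    exact pow_card_le_norm_multisetProd_map (by positivity) hfactor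
  have hdisc : ‖G z‖ ≤ M / (R / 2) ^ s.card := by
    refine Complex.norm_le_of_forall_mem_frontier_norm_le (U := Metric.ball (0 : ℂ) R)
      Metric.isBounded_ball hG.diffContOnCl (fun w hw ↦ hcircle w ?_) ?_
    · simpa [frontier_ball _ hR.ne'] using hw
    · simpa [closure_ball _ hR.ne'] using hz
  calc ‖g z‖ = ‖(s.map (z - ·)).prod‖ * ‖G z‖ := by rw [hgG, norm_mul]
    _ ≤ ρ ^ s.card * (M / (R / 2) ^ s.card) :=
        mul_le_mul (norm_multisetProd_map_le hρ) hdisc (norm_nonneg _)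
          ((norm_nonneg _).trans (norm_multisetProd_map_le hρ))
    _ = (2 * ρ / R) ^ s.card * M := by
        simp only [div_pow, mul_pow]
        field_simp

lemma norm_sub_natCast_le {z : ℂ} {a n H : ℕ} (ha : a < H) (hn : n < H) (hz : ‖z - a‖ ≤ 1) :
    ‖z - n‖ ≤ H := by
  have habs : |(a : ℤ) - n| ≤ (H - 1 : ℤ) := by rw [abs_le]; omega
  have hreal : |(a : ℝ) - n| ≤ H - 1 := mod_cast habs
  calc ‖z - n‖ ≤ ‖z - a‖ + ‖((a - n : ℝ) : ℂ)‖ := by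
        simpa using norm_sub_le_norm_sub_add_norm_sub z (a : ℂ) (n : ℂ)
    _ ≤ 1 + (H - 1) := by
        rw [Complex.norm_real, Real.norm_eq_abs]
        gcongr
    _ = H := by ring

lemma norm_iteratedDeriv_le_of_natCast_zeros {g : ℂ → ℂ} (hg : Differentiable ℂ g) {H k : ℕ}
    {R M : ℝ} (hR : 2 * H ≤ R)
    (hzero : ∀ a < H, ∀ i < k, iteratedDeriv i g (a : ℂ) = 0)
    (hM : ∀ z : ℂ, ‖z‖ = R → ‖g z‖ ≤ M) {a : ℕ} (ha : a < H) :
    ‖iteratedDeriv k g (a : ℂ)‖ ≤ k.factorial * ((2 * H / R) ^ (H * k) * M) := by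
  have hH : (a : ℝ) + 1 ≤ H := mod_cast ha
  set points : Multiset ℂ := (Multiset.range H).map (fun n : ℕ ↦ (n : ℂ)) with hpoints
  have hmem {b : ℂ} (hb : b ∈ k • points) : ∃ n < H, (n : ℂ) = b := by
    simpa [hpoints] using Multiset.mem_of_mem_nsmul hb
  have horder (b : ℂ) : ((k • points).count b : ℕ∞) ≤ analyticOrderAt g b := by
    by_cases hb : b ∈ points
    · rw [Multiset.count_nsmul, Multiset.count_eq_one_of_mem
        ((Multiset.nodup_range H).map Nat.cast_injective) hb, mul_one,
        natCast_le_analyticOrderAt_iff_iteratedDeriv_eq_zero (hg.analyticAt _)]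
      obtain ⟨n, hn, rfl⟩ := Multiset.mem_map.1 hb
      exact hzero n (Multiset.mem_range.1 hn)
    · simp [Multiset.count_eq_zero_of_notMem hb]
  have hcircle (z : ℂ) (hz : z ∈ Metric.sphere (a : ℂ) 1) :
      ‖g z‖ ≤ (2 * H / R) ^ (H * k) * M := by
    rw [mem_sphere_iff_norm] at hz
    have hcard : H * k = (k • points).card := by simp [hpoints, mul_comm]
    rw [hcard]
    refine norm_le_of_count_le_analyticOrderAt hg horder (by linarith) (fun b hb ↦ ?_) hM ?_
      fun b hb ↦ ?_
    · obtain ⟨n, hn, rfl⟩ := hmem hb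
      have : (n : ℝ) ≤ H := mod_cast hn.le
      rw [Complex.norm_natCast]
      linarith
    · have := norm_sub_norm_le z (a : ℂ)
      rw [hz, Complex.norm_natCast] at this
      linarith [(a.cast_nonneg : (0 : ℝ) ≤ a)]
    · obtain ⟨n, hn, rfl⟩ := hmem hb
      exact norm_sub_natCast_le ha hn hz.le
  simpa using Complex.norm_iteratedDeriv_le_of_forall_mem_sphere_norm_le k one_pos
    hg.diffContOnCl hcircle

end Schwarz

section ExponentialSums

open Complex

section WordSubstitution

variable {R S ι : Type*} [CommRing R] [Algebra ℂ R] [Fintype ι]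

lemma norm_map_mul_prod_le (E : R →ₗ[ℂ] ℂ) {X : S → R} {Y : ι → R} {c : S → ι → ℂ}
    (hX : ∀ σ, X σ = ∑ j, c σ j • Y j) {A ε : ℝ} (hA : ∀ σ, ∑ j, ‖c σ j‖ ≤ A) (hε : 0 ≤ ε)
    (s : Multiset S) (p : R) (hY : ∀ w : Multiset ι, w.card = s.card →
      ‖E (p * (w.map Y).prod)‖ ≤ ε) :
    ‖E (p * (s.map X).prod)‖ ≤ A ^ s.card * ε := by
  induction s using Multiset.induction_on generalizing p with
  | empty => simpa using hY 0 rfl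
  | cons σ s ih =>
    have hA0 : 0 ≤ A := (Finset.sum_nonneg fun j _ ↦ norm_nonneg (c σ j)).trans (hA σ)
    have hword (j : ι) : ‖E (p * Y j * (s.map X).prod)‖ ≤ A ^ s.card * ε := by
      refine ih (p * Y j) fun w hw ↦ ?_
      simpa [mul_assoc] using hY (j ::ₘ w) (by simp [hw])
    have hexpand : p * ((σ ::ₘ s).map X).prod = ∑ j, c σ j • (p * Y j * (s.map X).prod) := by
      rw [Multiset.map_cons, Multiset.prod_cons, hX, Finset.sum_mul, Finset.mul_sum]
      exact Finset.sum_congr rfl fun j _ ↦ by rw [smul_mul_assoc, mul_smul_comm, mul_assoc]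
    calc ‖E (p * ((σ ::ₘ s).map X).prod)‖
        ≤ ∑ j, ‖c σ j‖ * ‖E (p * Y j * (s.map X).prod)‖ := by
          rw [hexpand, map_sum]
          simpa only [map_smul, smul_eq_mul, norm_mul] using
            norm_sum_le Finset.univ fun j ↦ E (c σ j • (p * Y j * (s.map X).prod))
      _ ≤ (∑ j, ‖c σ j‖) * (A ^ s.card * ε) := by
          rw [Finset.sum_mul]
          gcongr with j
          exact hword j
      _ ≤ A * (A ^ s.card * ε) := by gcongr; exact hA σ
      _ = A ^ (σ ::ₘ s).card * ε := by rw [Multiset.card_cons, pow_succ', mul_assoc]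

end WordSubstitution

variable {Λ ι : Type*}

lemma norm_mul_prod_apply_le {Y : ι → Λ → ℂ} {p : Λ → ℂ} {B P : ℝ} (hY : ∀ j l, ‖Y j l‖ ≤ B)
    (hp : ∀ l, ‖p l‖ ≤ P) (w : Multiset ι) (l : Λ) :
    ‖(p * (w.map Y).prod) l‖ ≤ P * B ^ w.card := by
  have hword : (w.map Y).prod l = (w.map (Y · l)).prod := by
    simpa using map_multiset_prod (Pi.evalMonoidHom (fun _ : Λ ↦ ℂ) l) (w.map Y)
  rw [Pi.mul_apply, norm_mul, hword]
  have hP : 0 ≤ P := (norm_nonneg _).trans (hp l)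
  gcongr
  · exact hp l
  · exact norm_multisetProd_map_le fun j _ ↦ hY j l

variable [Fintype Λ] [Fintype ι]

/-- The exponential sum `p ↦ ∑ l, p l * exp ⟨h, Y · l⟩` with frequencies `Y · l`, evaluated at the
point `h`, as a linear form in its coefficients. Differentiating in the direction `i` amounts to
multiplying the coefficients by `Y i`. -/
noncomputable def expSum (Y : ι → Λ → ℂ) (h : ι → ℂ) : (Λ → ℂ) →ₗ[ℂ] ℂ :=
  ∑ l, cexp (∑ j, h j * Y j l) • LinearMap.proj l

lemma expSum_apply (Y : ι → Λ → ℂ) (h : ι → ℂ) (p : Λ → ℂ) :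
    expSum Y h p = ∑ l, p l * cexp (∑ j, h j * Y j l) := by
  simp [expSum, mul_comm]

lemma hasDerivAt_expSum_update [DecidableEq ι] (Y : ι → Λ → ℂ) (h : ι → ℂ) (p : Λ → ℂ)
    (i : ι) (z : ℂ) :
    HasDerivAt (fun z ↦ expSum Y (Function.update h i z) p)
      (expSum Y (Function.update h i z) (p * Y i)) z := by
  simp only [expSum_apply, Pi.mul_apply]
  refine HasDerivAt.fun_sum fun l _ ↦ ?_
  have hlin : HasDerivAt (fun z ↦ ∑ j, Function.update h i z j * Y j l) (Y i l) z := by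
    have := HasDerivAt.fun_sum (u := Finset.univ) fun j _ ↦
      (hasDerivAt_pi.1 (hasDerivAt_update (𝕜 := ℂ) h i z) j).mul_const (Y j l)
    simpa [Pi.single_apply] using this
  exact (hlin.cexp.const_mul (p l)).congr_deriv (by ring)

lemma iteratedDeriv_expSum_update [DecidableEq ι] (Y : ι → Λ → ℂ) (h : ι → ℂ) (p : Λ → ℂ)
    (i : ι) (n : ℕ) :
    iteratedDeriv n (fun z ↦ expSum Y (Function.update h i z) p) =
      fun z ↦ expSum Y (Function.update h i z) (p * Y i ^ n) := by
  induction n with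
  | zero => simp
  | succ n ih =>
    rw [iteratedDeriv_succ, ih]
    ext z
    rw [(hasDerivAt_expSum_update Y h _ i z).deriv, pow_succ, mul_assoc]

lemma norm_expSum_le {Y : ι → Λ → ℂ} {p : Λ → ℂ} {B P N : ℝ} (hY : ∀ j l, ‖Y j l‖ ≤ B)
    (hp : ∀ l, ‖p l‖ ≤ P) (hB : 0 ≤ B) {h : ι → ℂ} (hh : ∑ j, ‖h j‖ ≤ N) :
    ‖expSum Y h p‖ ≤ Fintype.card Λ * (P * Real.exp (B * N)) := by
  have hterm (l : Λ) : ‖p l * cexp (∑ j, h j * Y j l)‖ ≤ P * Real.exp (B * N) := by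
    have hexponent : (∑ j, h j * Y j l).re ≤ B * N := calc
      (∑ j, h j * Y j l).re ≤ ∑ j, ‖h j * Y j l‖ := (re_le_norm _).trans (norm_sum_le _ _)
      _ ≤ ∑ j, ‖h j‖ * B := by
          simp only [norm_mul]
          gcongr with j
          exact hY j l
      _ ≤ B * N := by rw [← Finset.sum_mul, mul_comm]; gcongr
    rw [norm_mul, norm_exp]
    gcongr
    · exact (norm_nonneg _).trans (hp l)
    · exact hp l
  calc ‖expSum Y h p‖ ≤ ∑ _l : Λ, P * Real.exp (B * N) := by
        rw [expSum_apply]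
        exact norm_sum_le_of_le _ fun l _ ↦ hterm l
    _ = Fintype.card Λ * (P * Real.exp (B * N)) := by simp

lemma exists_eq_add_replicate [Nonempty ι] (w : Multiset ι) :
    ∃ (i : ι) (k : ℕ) (t : Multiset ι), w = t + .replicate k i ∧ w.card ≤ Fintype.card ι * k := by
  classical
  obtain ⟨i, -, hi⟩ : ∃ i ∈ Finset.univ, w.card ≤ Fintype.card ι * w.count i := by
    refine Finset.exists_le_of_sum_le Finset.univ_nonempty ?_
    rw [← Finset.mul_sum, Multiset.sum_count_eq_card fun a _ ↦ Finset.mem_univ a]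
    simp
  obtain ⟨t, ht⟩ :=
    Multiset.le_iff_exists_add.1 (Multiset.le_count_iff_replicate_le.1 (le_refl (w.count i)))
  exact ⟨i, w.count i, t, by rwa [add_comm], hi⟩

lemma sum_norm_update_le [DecidableEq ι] (h : ι → ℂ) (i : ι) (z : ℂ) :
    ∑ j, ‖Function.update h i z j‖ ≤ ∑ j, ‖h j‖ + ‖z‖ := by
  rw [← Finset.add_sum_erase _ _ (Finset.mem_univ i), Function.update_self, add_comm]
  gcongr
  rw [Finset.sum_congr rfl fun j hj ↦ by rw [Function.update_of_ne (Finset.ne_of_mem_erase hj)]]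
  exact Finset.sum_le_sum_of_subset_of_nonneg (Finset.erase_subset _ _) fun _ _ _ ↦ norm_nonneg _

lemma norm_expSum_update_le [DecidableEq ι] {Y : ι → Λ → ℂ} {p : Λ → ℂ} {B P : ℝ}
    (hY : ∀ j l, ‖Y j l‖ ≤ B) (hp : ∀ l, ‖p l‖ ≤ P) (hB : 0 ≤ B) {h : ι → ℕ} {H : ℕ}
    (hh : ∀ j, h j < H) (i : ι) (z : ℂ) :
    ‖expSum Y (Function.update (h ·) i z) p‖ ≤
      Fintype.card Λ * (P * Real.exp (B * (Fintype.card ι * H + ‖z‖))) := by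
  refine norm_expSum_le hY hp hB ((sum_norm_update_le _ i z).trans ?_)
  have hsum : ∑ j, (h j : ℝ) ≤ ∑ _j : ι, (H : ℝ) := by
    gcongr with j
    exact (hh j).le
  simpa using hsum

lemma norm_expSum_word_le {Y : ι → Λ → ℂ} {p : Λ → ℂ} {B P R : ℝ} {H H₁ : ℕ}
    (hY : ∀ j l, ‖Y j l‖ ≤ B) (hp : ∀ l, ‖p l‖ ≤ P) (hP : 0 ≤ P) (hB : 1 ≤ B) (hR : 2 * H ≤ R)
    (hH : H = Fintype.card ι * H₁) [Nonempty ι] {w : Multiset ι}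
    (hzero : ∀ u : Multiset ι, u.card < w.card → ∀ h : ι → ℕ, (∀ j, h j < H) →
      expSum Y (h ·) (p * (u.map Y).prod) = 0) {h : ι → ℕ} (hh : ∀ j, h j < H) :
    ‖expSum Y (h ·) (p * (w.map Y).prod)‖ ≤ w.card.factorial * ((2 * H / R) ^ (H₁ * w.card) *
      (Fintype.card Λ * (P * B ^ w.card * Real.exp (B * (Fintype.card ι * H + R))))) := by
  classical
  obtain ⟨i, k, t, hw, hk⟩ := exists_eq_add_replicate w
  have hcard : w.card = t.card + k := by simp [hw]
  set M := Fintype.card Λ * (P * B ^ w.card * Real.exp (B * (Fintype.card ι * H + R))) with hM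
  set g : ℂ → ℂ := fun z ↦ expSum Y (Function.update (h ·) i z) (p * (t.map Y).prod) with hg
  have hgdiff : Differentiable ℂ g := fun z ↦ (hasDerivAt_expSum_update Y _ _ i z).differentiableAt
  have hderiv (n a : ℕ) : iteratedDeriv n g a =
      expSum Y (Function.update h i a ·) (p * ((t + .replicate n i).map Y).prod) := by
    rw [hg, iteratedDeriv_expSum_update]
    simp only [Multiset.map_add, Multiset.map_replicate, Multiset.prod_add, Multiset.prod_replicate,
      mul_assoc, ← Function.comp_def (Nat.cast (R := ℂ)), Function.comp_update]
  have hzeros (a : ℕ) (ha : a < H) (n : ℕ) (hn : n < k) : iteratedDeriv n g a = 0 := by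
    rw [hderiv]
    refine hzero _ (by simp [hcard, hn]) _ fun j ↦ ?_
    obtain rfl | hj := eq_or_ne j i
    · simpa using ha
    · simpa [hj] using hh j
  have hcircle (z : ℂ) (hz : ‖z‖ = R) : ‖g z‖ ≤ M := by
    rw [hM, ← hz]
    refine norm_expSum_update_le hY (fun l ↦ ?_) (by positivity) hh i z
    exact (norm_mul_prod_apply_le hY hp t l).trans
      (mul_le_mul_of_nonneg_left (pow_le_pow_right₀ hB (by omega)) hP)
  have hR0 : 0 < R := by
    have : (1 : ℝ) ≤ H := mod_cast (hh i).pos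
    linarith
  have hratio : 2 * H / R ≤ 1 := (div_le_one hR0).2 hR
  have : 0 ≤ M := by positivity
  calc ‖expSum Y (h ·) (p * (w.map Y).prod)‖ = ‖iteratedDeriv k g (h i)‖ := by
        rw [hderiv, Function.update_eq_self, hw]
    _ ≤ k.factorial * ((2 * H / R) ^ (H * k) * M) :=
        norm_iteratedDeriv_le_of_natCast_zeros hgdiff hR hzeros hcircle (hh i)
    _ ≤ w.card.factorial * ((2 * H / R) ^ (H₁ * w.card) * M) := by
        gcongr ?_ * (?_ * _)
        · exact_mod_cast Nat.factorial_le (by omega)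
        · refine pow_le_pow_of_le_one (by positivity) hratio ?_
          calc H₁ * w.card ≤ H₁ * (Fintype.card ι * k) := by gcongr
            _ = H * k := by rw [hH]; ring

lemma norm_expSum_word_le_of_basis_change {S : Type*} [Fintype S] [Nonempty ι]
    {X : S → Λ → ℂ} {Y : ι → Λ → ℂ} {v : ι → S → ℂ} {c : S → ι → ℂ}
    (hYX : ∀ j, Y j = ∑ σ, v j σ • X σ) (hXY : ∀ σ, X σ = ∑ j, c σ j • Y j)
    {A B P R : ℝ} {H H₁ : ℕ} (hc : ∀ σ, ∑ j, ‖c σ j‖ ≤ A)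
    {p : Λ → ℂ} (hY : ∀ j l, ‖Y j l‖ ≤ B) (hp : ∀ l, ‖p l‖ ≤ P) (hP : 0 ≤ P) (hB : 1 ≤ B)
    (hR : 2 * H ≤ R) (hH : H = Fintype.card ι * H₁) {s : Multiset S}
    (hzero : ∀ u : Multiset S, u.card < s.card → ∀ h : ι → ℕ, (∀ j, h j < H) →
      expSum Y (h ·) (p * (u.map X).prod) = 0) {h : ι → ℕ} (hh : ∀ j, h j < H) :
    ‖expSum Y (h ·) (p * (s.map X).prod)‖ ≤
      A ^ s.card * (s.card.factorial * ((2 * H / R) ^ (H₁ * s.card) *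
        (Fintype.card Λ * (P * B ^ s.card * Real.exp (B * (Fintype.card ι * H + R)))))) := by
  have hzeroY (w : Multiset ι) (hw : w.card < s.card) (h : ι → ℕ) (hh : ∀ j, h j < H) :
      expSum Y (h ·) (p * (w.map Y).prod) = 0 := by
    have hv (j : ι) : ∑ σ, ‖v j σ‖ ≤ ∑ j, ∑ σ, ‖v j σ‖ :=
      Finset.single_le_sum (f := fun j ↦ ∑ σ, ‖v j σ‖) (fun _ _ ↦ by positivity)
        (Finset.mem_univ j)
    have := norm_map_mul_prod_le (expSum Y (h ·)) hYX hv le_rfl w p fun u hu ↦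
      (norm_eq_zero.2 (hzero u (hu ▸ hw) h hh)).le
    rwa [mul_zero, norm_le_zero_iff] at this
  have hR0 : 0 ≤ R := le_trans (by positivity) hR
  refine norm_map_mul_prod_le _ hXY hc (by positivity) s p fun w hw ↦ ?_
  rw [← hw] at hzeroY ⊢
  exact norm_expSum_word_le hY hp hP hB hR hH hzeroY hh

end ExponentialSums

section Arithmetic

open NumberField

lemma exists_siegel_constant (K : Type*) [Field K] [NumberField K] :
    ∃ c : ℝ, ∀ {α β : Type*} [Fintype α] [Fintype β] (a : Matrix α β (𝓞 K)) (A : ℝ), a ≠ 0 →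
      0 < Fintype.card α → Fintype.card α < Fintype.card β → (∀ k l, house (a k l : K) ≤ A) →
      ∃ ξ : β → 𝓞 K, ξ ≠ 0 ∧ a.mulVec ξ = 0 ∧ ∀ l, house (ξ l : K) ≤
        c * (c * Fintype.card β * A) ^
          ((Fintype.card α : ℝ) / (Fintype.card β - Fintype.card α)) := by
  classical
  refine ⟨_, fun a A ha hα hαβ hA ↦
    house.exists_ne_zero_int_vec_house_le K a ha hα hαβ rfl hA rfl⟩

lemma mul_rpow_le_of_le_one {c C B e : ℝ} (hC : 1 ≤ C) (hcC : |c| ≤ C) (hB : 1 ≤ B) (he₀ : 0 ≤ e)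
    (he₁ : e ≤ 1) : c * (c * B) ^ e ≤ C ^ 2 * B := by
  have hCB : 1 ≤ C * B := one_le_mul_of_one_le_of_one_le hC hB
  calc c * (c * B) ^ e ≤ |c| * |c * B| ^ e := by
        refine (le_abs_self _).trans ?_
        rw [abs_mul]
        gcongr
        exact Real.abs_rpow_le_abs_rpow _ _
    _ ≤ C * (C * B) ^ e := by
        rw [abs_mul, abs_of_pos (by linarith : 0 < B)]
        gcongr
    _ ≤ C * (C * B) ^ (1 : ℝ) := by gcongr
    _ = C ^ 2 * B := by rw [Real.rpow_one]; ring

lemma exists_siegel_solution (K : Type*) [Field K] [NumberField K] :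
    ∃ c : ℝ, ∀ {α β : Type*} [Fintype α] [Fintype β] [Nonempty β]
      (a : Matrix α β (𝓞 K)) {A : ℝ}, 1 ≤ A → 2 * Fintype.card α ≤ Fintype.card β →
      (∀ k l, house (a k l : K) ≤ A) →
      ∃ ξ : β → 𝓞 K, ξ ≠ 0 ∧ a.mulVec ξ = 0 ∧
        ∀ l, house (ξ l : K) ≤ c * (Fintype.card β * A) := by
  obtain ⟨c, hc⟩ := exists_siegel_constant K
  refine ⟨max 1 |c| ^ 2, fun {α β} _ _ _ a A hA hαβ ha ↦ ?_⟩
  have hβA : 1 ≤ Fintype.card β * A :=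
    one_le_mul_of_one_le_of_one_le (mod_cast Fintype.card_pos) hA
  obtain rfl | ha₀ := eq_or_ne a 0
  · refine ⟨1, one_ne_zero, Matrix.zero_mulVec 1, fun l ↦ ?_⟩
    have hone : house ((1 : 𝓞 K) : K) = 1 := by simpa using house_intCast (K := K) 1
    rw [Pi.one_apply, hone]
    exact one_le_mul_of_one_le_of_one_le (one_le_pow₀ (le_max_left _ _)) hβA
  · have hα : 0 < Fintype.card α := by
      rw [Fintype.card_pos_iff, ← not_isEmpty_iff]
      exact fun _ ↦ ha₀ (Subsingleton.elim a 0)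
    obtain ⟨ξ, hξ₀, hξ, hhouse⟩ := hc a A ha₀ hα (by omega) ha
    refine ⟨ξ, hξ₀, hξ, fun l ↦ (hhouse l).trans ?_⟩
    have hpos : (0 : ℝ) < Fintype.card β - Fintype.card α := sub_pos.2 (mod_cast (by omega))
    have hle : (2 : ℝ) * Fintype.card α ≤ Fintype.card β := mod_cast hαβ
    rw [mul_assoc c]
    exact mul_rpow_le_of_le_one (le_max_left _ _) (le_max_right _ _) hβA (by positivity)
      ((div_le_one hpos).2 (by linarith))

lemma one_le_norm_mul_pow {F : Type*} [Field F] [NumberField F] (ψ : F →+* ℂ) {z : 𝓞 F}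
    (hz : z ≠ 0) {V : ℝ} (hV : ∀ φ : F →+* ℂ, ‖φ z‖ ≤ V) :
    1 ≤ ‖ψ z‖ * V ^ (Module.finrank ℚ F - 1) := by
  have hhouse : house (z : F) ≤ V := (canonicalEmbedding.norm_le_iff _ _).2 hV
  have hnorm : (1 : ℝ) ≤ ‖Algebra.norm ℚ (z : F)‖ := by
    rw [← Algebra.coe_norm_int, ← Rat.norm_cast_real, Rat.cast_intCast, Int.norm_cast_real,
      Int.norm_eq_abs]
    exact_mod_cast Int.one_le_abs (Algebra.norm_ne_zero_iff.2 hz)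
  calc (1 : ℝ) ≤ ‖Algebra.norm ℚ (z : F)‖ := hnorm
    _ ≤ ‖ψ z‖ * house (z : F) ^ (Module.finrank ℚ F - 1) := norm_norm_le_norm_mul_house_pow _ ψ
    _ ≤ ‖ψ z‖ * V ^ (Module.finrank ℚ F - 1) := by
        gcongr
        exact house_nonneg _

lemma exists_sum_mul_pow_ne_zero {R Λ : Type*} [CommRing R] [IsDomain R] [Fintype Λ] {f p : Λ → R}
    (hf : Function.Injective f) (hp : p ≠ 0) : ∃ n : ℕ, ∑ l, p l * f l ^ n ≠ 0 := by
  by_contra! hsum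
  have e := Fintype.equivFin Λ
  have hzero : p ∘ e.symm = 0 := by
    refine Matrix.eq_zero_of_forall_pow_sum_mul_pow_eq_zero (hf.comp e.symm.injective) fun i ↦ ?_
    rw [← hsum i, ← Equiv.sum_comp e.symm]
    rfl
  exact hp (by simpa [Function.comp_assoc] using congr($hzero ∘ e))

end Arithmetic

section LatticeForms

variable {R R' ι : Type*} [CommSemiring R] [CommSemiring R'] [Fintype ι] {L : ℕ}

/-- The combination `∑ i, l i * x i` with digits `l i < L`. -/
def latticeForm (x : ι → R) (l : ι → Fin L) : R :=
  ∑ i, ((l i : ℕ) : R) * x i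

lemma map_latticeForm (f : R →+* R') (x : ι → R) (l : ι → Fin L) :
    f (latticeForm x l) = latticeForm (f ∘ x) l := by
  simp [latticeForm]

lemma latticeForm_sum_smul {κ : Type*} [Fintype κ] (c : κ → R) (y : κ → ι → R) (l : ι → Fin L) :
    latticeForm (∑ j, c j • y j) l = ∑ j, c j * latticeForm (y j) l := by
  simp only [latticeForm, Finset.sum_apply, Pi.smul_apply, smul_eq_mul, Finset.mul_sum]
  rw [Finset.sum_comm]
  exact Finset.sum_congr rfl fun _ _ ↦ Finset.sum_congr rfl fun _ _ ↦ mul_left_comm _ _ _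

lemma latticeForm_injective {R : Type*} [CommRing R] {x : ι → R} (hx : LinearIndependent ℤ x) :
    Function.Injective (latticeForm x : (ι → Fin L) → R) := by
  intro l l' hl
  ext i
  have hcoord := Fintype.linearIndependent_iff.1 hx (fun i ↦ (l i : ℤ) - l' i)
    (by simpa [latticeForm, sub_smul, Finset.sum_sub_distrib, sub_eq_zero] using hl) i
  simpa [sub_eq_zero] using hcoord

lemma norm_latticeForm_le {x : ι → ℂ} {A : ℝ} (hx : ∑ i, ‖x i‖ ≤ A) (l : ι → Fin L) :
    ‖latticeForm x l‖ ≤ A * L := by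
  have hdigit (i : ι) : ((l i : ℕ) : ℝ) ≤ L := mod_cast (l i).2.le
  calc ‖latticeForm x l‖ ≤ ∑ i, L * ‖x i‖ := by
        refine norm_sum_le_of_le _ fun i _ ↦ ?_
        rw [norm_mul, Complex.norm_natCast]
        exact mul_le_mul_of_nonneg_right (hdigit i) (norm_nonneg _)
    _ ≤ A * L := by
        rw [← Finset.mul_sum, mul_comm]
        gcongr

end LatticeForms

section Parameters

lemma exists_parameters {d H : ℕ} (hd : 1 ≤ d) (hH : 1 ≤ H) (B : ℝ) : ∃ L T : ℕ, 1 ≤ L ∧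
    B ≤ T ∧ 2 * H * L ≤ T ∧ 2 * (T ^ (d - 1) * H ^ d) ≤ L ^ d ∧
    ∀ τ : ℕ, T ≤ τ → (2 * H * L / τ : ℝ) ^ (2 * d) ≤ 1 / τ := by
  obtain ⟨N₀, hN₀⟩ := exists_nat_ge B
  let N := max N₀ ((4 * H ^ 2) ^ (2 * d))
  have hNH : (4 * H ^ 2) ^ (2 * d) ≤ N := le_max_right _ _
  have hN : 1 ≤ N := (Nat.one_le_pow _ _ (by positivity)).trans hNH
  have hNd : N ^ d = N * N ^ (d - 1) := by rw [← pow_succ', Nat.sub_add_cancel hd]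
  refine ⟨2 * H * N ^ (d - 1), N ^ d, Nat.mul_pos (by omega) (Nat.pow_pos hN), ?_, ?_, ?_,
    fun τ hτ ↦ ?_⟩
  · exact hN₀.trans (mod_cast (le_max_left _ _).trans (Nat.le_self_pow (by omega) N))
  · calc 2 * H * (2 * H * N ^ (d - 1)) = 4 * H ^ 2 * N ^ (d - 1) := by ring
      _ ≤ (4 * H ^ 2) ^ (2 * d) * N ^ (d - 1) := by
        gcongr
        exact Nat.le_self_pow (by omega) _
      _ ≤ N ^ d := by rw [hNd]; gcongr
  · calc 2 * ((N ^ d) ^ (d - 1) * H ^ d) ≤ 2 ^ d * ((N ^ d) ^ (d - 1) * H ^ d) := by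
          gcongr
          exact Nat.le_self_pow (by omega) 2
      _ = (2 * H * N ^ (d - 1)) ^ d := by rw [pow_right_comm N]; ring
  · have hτ₀ : (0 : ℝ) < τ := mod_cast (Nat.pow_pos hN).trans_le hτ
    have hNτ : N ≤ τ := (Nat.le_self_pow (by omega) N).trans hτ
    have hroot : (2 * H * (2 * H * N ^ (d - 1) : ℕ) / τ : ℝ) ^ d ≤ (4 * H ^ 2) ^ d / τ := by
      rw [div_pow, div_le_div_iff₀ (by positivity) hτ₀]
      norm_cast
      calc (2 * H * (2 * H * N ^ (d - 1))) ^ d * τ = (4 * H ^ 2) ^ d * ((N ^ d) ^ (d - 1) * τ) := by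
            rw [pow_right_comm N]; ring
        _ ≤ (4 * H ^ 2) ^ d * (τ ^ (d - 1) * τ) := by gcongr
        _ = (4 * H ^ 2) ^ d * τ ^ d := by rw [← pow_succ, Nat.sub_add_cancel hd]
    calc (2 * H * (2 * H * N ^ (d - 1) : ℕ) / τ : ℝ) ^ (2 * d)
        ≤ ((4 * H ^ 2) ^ d / τ) ^ 2 := by
          rw [mul_comm 2 d, pow_mul]
          gcongr
      _ = (4 * H ^ 2) ^ (2 * d) / τ ^ 2 := by rw [div_pow, ← pow_mul, mul_comm d]
      _ ≤ τ / τ ^ 2 := by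
          gcongr
          exact_mod_cast hNH.trans hNτ
      _ = 1 / τ := by field_simp

/-- `τ` is so large that every factor of the estimates is at most a power of `τ ^ τ` whose exponent
depends on the dimension `d` only. -/
structure Dominates (τ d L H : ℕ) (A : ℝ) : Prop where
  one_le_bound : 1 ≤ A
  one_le_degree : 1 ≤ L
  one_le_height : 1 ≤ H
  mul_le : 2 * H * L ≤ τ
  exp_le : Real.exp (A * (d + 1)) ≤ τ

namespace Dominates

variable {τ d L H : ℕ} {A P : ℝ}

lemma mul_add_one_lt (hτ : Dominates τ d L H A) : A * (d + 1) < τ :=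
  (lt_add_one _).trans_le ((Real.add_one_le_exp _).trans hτ.exp_le)

lemma bound_le (hτ : Dominates τ d L H A) : A ≤ τ :=
  (le_mul_of_one_le_right (zero_le_one.trans hτ.one_le_bound) (by simp)).trans
    hτ.mul_add_one_lt.le

lemma one_lt (hτ : Dominates τ d L H A) : (1 : ℝ) < τ :=
  (one_le_mul_of_one_le_of_one_le hτ.one_le_bound (by simp)).trans_lt hτ.mul_add_one_lt

lemma dim_le (hτ : Dominates τ d L H A) : d ≤ τ := by
  have hd : (d + 1 : ℝ) < τ :=
    (le_mul_of_one_le_left (by positivity) hτ.one_le_bound).trans_lt hτ.mul_add_one_lt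
  exact_mod_cast (lt_add_one _).le.trans hd.le

lemma degree_mul_height_le (hτ : Dominates τ d L H A) : L * H ≤ τ :=
  le_trans (by rw [mul_comm L, mul_assoc]; omega) hτ.mul_le

lemma degree_le (hτ : Dominates τ d L H A) : L ≤ τ :=
  (Nat.le_mul_of_pos_right L hτ.one_le_height).trans hτ.degree_mul_height_le

lemma bound_mul_degree_le (hτ : Dominates τ d L H A) : A * L ≤ (τ : ℝ) ^ 2 := by
  rw [sq]
  gcongr
  exacts [hτ.bound_le, hτ.degree_le]

lemma degree_pow_dim_le (hτ : Dominates τ d L H A) : (L : ℝ) ^ d ≤ (τ : ℝ) ^ τ := by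
  have := hτ.one_lt.le
  calc (L : ℝ) ^ d ≤ (τ : ℝ) ^ d := by gcongr; exact hτ.degree_le
    _ ≤ (τ : ℝ) ^ τ := by gcongr; exact hτ.dim_le

lemma bound_pow_le (hτ : Dominates τ d L H A) {n : ℕ} (hn : n ≤ τ) : A ^ n ≤ (τ : ℝ) ^ τ := by
  have := hτ.one_lt.le
  have := zero_le_one.trans hτ.one_le_bound
  calc A ^ n ≤ (τ : ℝ) ^ n := by gcongr; exact hτ.bound_le
    _ ≤ (τ : ℝ) ^ τ := by gcongr

lemma bound_mul_degree_pow_le (hτ : Dominates τ d L H A) (n : ℕ) :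
    (A * L) ^ n ≤ (τ : ℝ) ^ (2 * n) := by
  have := zero_le_one.trans hτ.one_le_bound
  rw [pow_mul]
  gcongr
  exact hτ.bound_mul_degree_le

lemma coefficient_le (hτ : Dominates τ d L H A) {s T : ℕ} {c : ℝ} (hs : s ≤ d) (hT : T ≤ τ)
    (hc : c ≤ τ) :
    c * (L ^ d * ((A * L) ^ (s * T) * A ^ (L * H))) ≤ (τ : ℝ) ^ ((2 * d + 3) * τ) := by
  have ht := hτ.one_lt.le
  have hA := zero_le_one.trans hτ.one_le_bound
  have hτ₀ : τ ≠ 0 := Nat.cast_ne_zero.1 (zero_lt_one.trans_le ht).ne'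
  calc c * (L ^ d * ((A * L) ^ (s * T) * A ^ (L * H)))
      ≤ τ ^ τ * (τ ^ τ * (τ ^ (2 * (d * τ)) * τ ^ τ)) := by
        gcongr
        · exact hc.trans (le_self_pow₀ ht hτ₀)
        · exact hτ.degree_pow_dim_le
        · exact (hτ.bound_mul_degree_pow_le _).trans (by gcongr)
        · exact hτ.bound_pow_le hτ.degree_mul_height_le
    _ = (τ : ℝ) ^ ((2 * d + 3) * τ) := by ring

lemma conjugate_le (hτ : Dominates τ d L H A) (hP₀ : 0 ≤ P)
    (hP : P ≤ (τ : ℝ) ^ ((2 * d + 3) * τ)) :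
    L ^ d * (P * ((A * L) ^ τ * A ^ (L * H))) ≤ (τ : ℝ) ^ ((2 * d + 7) * τ) := by
  have hA := zero_le_one.trans hτ.one_le_bound
  calc L ^ d * (P * ((A * L) ^ τ * A ^ (L * H)))
      ≤ τ ^ τ * (τ ^ ((2 * d + 3) * τ) * (τ ^ (2 * τ) * τ ^ τ)) := by
        gcongr
        · exact hτ.degree_pow_dim_le
        · exact hτ.bound_mul_degree_pow_le _
        · exact hτ.bound_pow_le hτ.degree_mul_height_le
    _ = (τ : ℝ) ^ ((2 * d + 7) * τ) := by ring

lemma exp_radius_le (hτ : Dominates τ d L H A) :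
    Real.exp (A * L * (d * H + τ / L)) ≤ (τ : ℝ) ^ τ := by
  have hL : (L : ℝ) ≠ 0 := mod_cast (Nat.one_le_iff_ne_zero.1 hτ.one_le_degree)
  have hLH : (L : ℝ) * H ≤ τ := mod_cast hτ.degree_mul_height_le
  have hA := zero_le_one.trans hτ.one_le_bound
  have hexponent : A * L * (d * H + τ / L) ≤ τ * (A * (d + 1)) := by
    calc A * L * (d * H + τ / L) = A * (d * (L * H) + τ) := by field_simp
      _ ≤ A * (d * τ + τ) := by gcongr
      _ = τ * (A * (d + 1)) := by ring
  calc Real.exp (A * L * (d * H + τ / L)) ≤ Real.exp (τ * (A * (d + 1))) :=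
        Real.exp_le_exp.2 hexponent
    _ = Real.exp (A * (d + 1)) ^ τ := Real.exp_nat_mul _ _
    _ ≤ (τ : ℝ) ^ τ := by gcongr; exact hτ.exp_le

lemma analytic_le (hτ : Dominates τ d L H A) (hP₀ : 0 ≤ P)
    (hP : P ≤ (τ : ℝ) ^ ((2 * d + 3) * τ)) {q : ℝ} (hq : 0 ≤ q) :
    A ^ (L * H) * (A ^ τ * (τ.factorial * (q * (L ^ d * (P * (A * L) ^ τ *
      Real.exp (A * L * (d * H + τ / L))))))) ≤ (τ : ℝ) ^ ((2 * d + 10) * τ) * q := by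
  have hA := zero_le_one.trans hτ.one_le_bound
  calc A ^ (L * H) * (A ^ τ * (τ.factorial * (q * (L ^ d * (P * (A * L) ^ τ *
        Real.exp (A * L * (d * H + τ / L)))))))
      ≤ τ ^ τ * (τ ^ τ * (τ ^ τ * (q * (τ ^ τ * (τ ^ ((2 * d + 3) * τ) * τ ^ (2 * τ) *
          τ ^ τ))))) := by
        gcongr
        · exact hτ.bound_pow_le hτ.degree_mul_height_le
        · exact hτ.bound_le
        · exact_mod_cast Nat.factorial_le_pow τ
        · exact hτ.degree_pow_dim_le
        · exact hτ.bound_mul_degree_pow_le _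
        · exact hτ.exp_radius_le
    _ = (τ : ℝ) ^ ((2 * d + 10) * τ) * q := by ring

end Dominates

lemma pow_mul_pow_mul_pow_lt_one {t q : ℝ} {D e m τ : ℕ} (ht : 1 < t) (hq₀ : 0 ≤ q)
    (hq : q ^ D ≤ 1 / t) (hτ : τ ≠ 0) :
    t ^ (e * τ) * q ^ (D * (e * (m + 1) + 1) * τ) * (t ^ (e * τ)) ^ m < 1 := by
  calc t ^ (e * τ) * q ^ (D * (e * (m + 1) + 1) * τ) * (t ^ (e * τ)) ^ m
      = t ^ (e * (m + 1) * τ) * (q ^ D) ^ ((e * (m + 1) + 1) * τ) := by ring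
    _ ≤ t ^ (e * (m + 1) * τ) * (1 / t) ^ ((e * (m + 1) + 1) * τ) := by gcongr
    _ = (1 / t) ^ τ := by
        rw [add_mul, pow_add, one_mul, ← mul_assoc, ← mul_pow]
        field_simp
        simp
    _ < 1 := pow_lt_one₀ (by positivity) ((div_lt_one (by linarith)).2 ht) hτ

end Parameters

section Interpolation

open NumberField Complex

/-- The input of the interpolation argument: points `x σ` with coordinates in a ring `O` (of
algebraic integers) embedded by `ψ`, and vectors `Φ j` of logarithms, `exp (Φ j i)` being the
quotient of `ψ (num j i)` by `ψ den`. The matrices `v` and `c` express the vectors `Φ j` and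
`ψ ∘ x σ` in terms of each other, and `bound` majorizes all the sizes entering the estimates. -/
structure InterpolationData {O : Type*} [CommRing O] (ψ : O →+* ℂ) (S ι : Type*)
    [Fintype S] [Fintype ι] where
  x : S → ι → O
  Φ : ι → ι → ℂ
  num : ι → ι → O
  den : O
  map_den_ne_zero : ψ den ≠ 0
  map_num : ∀ j i, ψ (num j i) = ψ den * cexp (Φ j i)
  v : ι → S → ℂ
  c : S → ι → ℂ
  Φ_eq_sum : ∀ j, Φ j = ∑ σ, v j σ • fun i ↦ ψ (x σ i)
  x_eq_sum : ∀ σ, (fun i ↦ ψ (x σ i)) = ∑ j, c σ j • Φ j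
  bound : ℝ
  one_le_bound : 1 ≤ bound
  sum_norm_x_le : ∀ (φ : O →+* ℂ) σ, ∑ i, ‖φ (x σ i)‖ ≤ bound
  sum_norm_Φ_le : ∀ j, ∑ i, ‖Φ j i‖ ≤ bound
  sum_norm_c_le : ∀ σ, ∑ j, ‖c σ j‖ ≤ bound
  prod_norm_num_den_le : ∀ φ : O →+* ℂ, ∏ j, ∏ i, max ‖φ (num j i)‖ ‖φ den‖ ≤ bound

namespace InterpolationData

section

variable {O : Type*} [CommRing O] {ψ : O →+* ℂ} {S ι : Type*} [Fintype S] [Fintype ι]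
  (D : InterpolationData ψ S ι) {L H : ℕ}

/-- A multiple, by a power of the denominator, of the exponential of
`∑ j, h j * latticeForm (Φ j) l`, as an algebraic integer. -/
noncomputable def expMonomial (H : ℕ) (h : ι → ℕ) (l : ι → Fin L) : O :=
  ∏ j, ∏ i, D.num j i ^ ((l i : ℕ) * h j) * D.den ^ (L * H - (l i : ℕ) * h j)

lemma map_expMonomial {h : ι → ℕ} (hh : ∀ j, h j < H) (l : ι → Fin L) :
    ψ (D.expMonomial H h l) = ψ D.den ^ (Fintype.card ι * Fintype.card ι * (L * H)) *
      cexp (∑ j, h j * latticeForm (D.Φ j) l) := by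
  have hfactor (j i : ι) : ψ (D.num j i) ^ ((l i : ℕ) * h j) *
      ψ D.den ^ (L * H - (l i : ℕ) * h j) =
        ψ D.den ^ (L * H) * cexp (h j * ((l i : ℕ) * D.Φ j i)) := by
    have hexponent : (l i : ℕ) * h j ≤ L * H := Nat.mul_le_mul (l i).2.le (hh j).le
    rw [D.map_num, mul_pow, ← exp_nat_mul, mul_right_comm, ← pow_add,
      Nat.add_sub_cancel' hexponent, Nat.cast_mul, mul_assoc, mul_left_comm (h j : ℂ)]
  simp only [expMonomial, map_prod, map_mul, map_pow, hfactor]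
  simp only [Finset.prod_mul_distrib, Finset.prod_const, Finset.card_univ, ← exp_sum,
    ← Finset.mul_sum, ← pow_mul, latticeForm]
  congr 2
  ring

lemma norm_map_expMonomial_le (φ : O →+* ℂ) {h : ι → ℕ} (hh : ∀ j, h j < H) (l : ι → Fin L) :
    ‖φ (D.expMonomial H h l)‖ ≤ D.bound ^ (L * H) := by
  have hfactor (j i : ι) : ‖φ (D.num j i)‖ ^ ((l i : ℕ) * h j) *
      ‖φ D.den‖ ^ (L * H - (l i : ℕ) * h j) ≤ max ‖φ (D.num j i)‖ ‖φ D.den‖ ^ (L * H) := by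
    have hexponent : (l i : ℕ) * h j ≤ L * H := Nat.mul_le_mul (l i).2.le (hh j).le
    rw [← Nat.add_sub_cancel' hexponent, pow_add, Nat.add_sub_cancel' hexponent]
    gcongr
    · exact le_max_left _ _
    · exact le_max_right _ _
  simp only [expMonomial, map_prod, map_mul, map_pow, norm_prod, norm_mul, norm_pow]
  calc _ ≤ ∏ j, ∏ i, max ‖φ (D.num j i)‖ ‖φ D.den‖ ^ (L * H) := by
        gcongr with j _ i
        exact hfactor j i
    _ = (∏ j, ∏ i, max ‖φ (D.num j i)‖ ‖φ D.den‖) ^ (L * H) := by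
        simp only [Finset.prod_pow]
    _ ≤ D.bound ^ (L * H) := by
        gcongr
        exact D.prod_norm_num_den_le φ

lemma norm_map_den_pow_le :
    ‖ψ D.den ^ (Fintype.card ι * Fintype.card ι * (L * H))‖ ≤ D.bound ^ (L * H) := by
  rw [norm_pow, pow_mul]
  gcongr
  calc ‖ψ D.den‖ ^ (Fintype.card ι * Fintype.card ι) = ∏ _j : ι, ∏ _i : ι, ‖ψ D.den‖ := by
        simp [pow_mul]
    _ ≤ ∏ j, ∏ i, max ‖ψ (D.num j i)‖ ‖ψ D.den‖ := by
        gcongr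
        exact le_max_right _ _
    _ ≤ D.bound := D.prod_norm_num_den_le ψ

lemma map_prod_latticeForm (φ : O →+* ℂ) (s : Multiset S) (l : ι → Fin L) :
    φ (s.map fun σ ↦ latticeForm (D.x σ) l).prod =
      (s.map fun σ ↦ latticeForm (fun i ↦ φ (D.x σ i)) l).prod := by
  rw [map_multiset_prod, Multiset.map_map]
  simp only [Function.comp_def, map_latticeForm]

lemma norm_map_word_mul_expMonomial_le (φ : O →+* ℂ) (s : Multiset S) {h : ι → ℕ}
    (hh : ∀ j, h j < H) (l : ι → Fin L) :
    ‖φ ((s.map fun σ ↦ latticeForm (D.x σ) l).prod * D.expMonomial H h l)‖ ≤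
      (D.bound * L) ^ s.card * D.bound ^ (L * H) := by
  rw [map_mul, norm_mul]
  gcongr
  · have := D.one_le_bound
    positivity
  · rw [D.map_prod_latticeForm]
    exact norm_multisetProd_map_le fun σ _ ↦ norm_latticeForm_le (D.sum_norm_x_le φ σ) l
  · exact D.norm_map_expMonomial_le φ hh l

variable [DecidableEq ι]

/-- A multiple, by a power of the denominator, of the value at the lattice point `∑ j, h j • Φ j` of
the derivative along the word `s` of the auxiliary function `z ↦ ∑ l, ξ l * exp ⟨l, z⟩`. -/
noncomputable def value (H : ℕ) (ξ : (ι → Fin L) → O) (s : Multiset S) (h : ι → ℕ) : O :=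
  ∑ l, ξ l * ((s.map fun σ ↦ latticeForm (D.x σ) l).prod * D.expMonomial H h l)

lemma norm_map_value_le (φ : O →+* ℂ) {ξ : (ι → Fin L) → O} {P : ℝ} (hξ : ∀ l, ‖φ (ξ l)‖ ≤ P)
    (s : Multiset S) {h : ι → ℕ} (hh : ∀ j, h j < H) :
    ‖φ (D.value H ξ s h)‖ ≤
      L ^ Fintype.card ι * (P * ((D.bound * L) ^ s.card * D.bound ^ (L * H))) := by
  have hterm (l : ι → Fin L) :
      ‖φ (ξ l * ((s.map fun σ ↦ latticeForm (D.x σ) l).prod * D.expMonomial H h l))‖ ≤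
        P * ((D.bound * L) ^ s.card * D.bound ^ (L * H)) := by
    rw [map_mul, norm_mul]
    exact mul_le_mul (hξ l) (D.norm_map_word_mul_expMonomial_le φ s hh l) (norm_nonneg _)
      ((norm_nonneg _).trans (hξ l))
  rw [value, map_sum]
  refine (norm_sum_le_of_le _ fun l _ ↦ hterm l).trans_eq ?_
  simp

lemma map_value (ξ : (ι → Fin L) → O) (s : Multiset S) {h : ι → ℕ} (hh : ∀ j, h j < H) :
    ψ (D.value H ξ s h) = ψ D.den ^ (Fintype.card ι * Fintype.card ι * (L * H)) *
      expSum (fun j ↦ latticeForm (D.Φ j)) (h ·) ((fun l ↦ ψ (ξ l)) *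
        (s.map fun σ ↦ latticeForm fun i ↦ ψ (D.x σ i)).prod) := by
  have hword (l : ι → Fin L) : (s.map fun σ ↦ latticeForm fun i ↦ ψ (D.x σ i)).prod l =
      (s.map fun σ ↦ latticeForm (fun i ↦ ψ (D.x σ i)) l).prod := by
    simpa using map_multiset_prod (Pi.evalMonoidHom (fun _ : ι → Fin L ↦ ℂ) l)
      (s.map fun σ ↦ latticeForm fun i ↦ ψ (D.x σ i))
  simp only [value, map_sum, map_mul, D.map_prod_latticeForm, D.map_expMonomial hh, expSum_apply,
    Finset.mul_sum, Pi.mul_apply, hword]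
  exact Finset.sum_congr rfl fun l _ ↦ by ring

lemma exists_value_ne_zero [IsDomain O] {σ₀ : S} (hx : LinearIndependent ℤ (D.x σ₀))
    {ξ : (ι → Fin L) → O} (hξ : ξ ≠ 0) : ∃ s, D.value H ξ s 0 ≠ 0 := by
  obtain ⟨n, hn⟩ := exists_sum_mul_pow_ne_zero (latticeForm_injective hx) hξ
  refine ⟨Multiset.replicate n σ₀, ?_⟩
  simp only [value, expMonomial, Multiset.map_replicate, Multiset.prod_replicate, Pi.zero_apply,
    mul_zero, pow_zero, one_mul, Nat.sub_zero, ← mul_assoc, ← Finset.sum_mul]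
  exact mul_ne_zero hn (by simp [ne_zero_of_map D.map_den_ne_zero])

lemma exists_minimal_value_ne_zero [IsDomain O] {σ₀ : S} (hx : LinearIndependent ℤ (D.x σ₀))
    {ξ : (ι → Fin L) → O} (hξ : ξ ≠ 0) (hH : 1 ≤ H) :
    ∃ s h, (∀ j, h j < H) ∧ D.value H ξ s h ≠ 0 ∧ ∀ u : Multiset S, u.card < s.card →
      ∀ h : ι → ℕ, (∀ j, h j < H) → D.value H ξ u h = 0 := by
  obtain ⟨s, hs⟩ := D.exists_value_ne_zero (H := H) hx hξ
  obtain ⟨s, ⟨h, hh, hs⟩, hmin⟩ := exists_minimalFor_of_wellFoundedLT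
    (fun s ↦ ∃ h : ι → ℕ, (∀ j, h j < H) ∧ D.value H ξ s h ≠ 0) Multiset.card ⟨s, 0, fun _ ↦ hH, hs⟩
  refine ⟨s, h, hh, hs, fun u hu h' hh' ↦ ?_⟩
  by_contra hne
  exact (hmin ⟨h', hh', hne⟩ hu.le).not_gt hu

lemma norm_map_value_le_of_forall_value_eq_zero [Nonempty ι] {ξ : (ι → Fin L) → O} {P R : ℝ}
    {H₁ : ℕ} (hξ : ∀ l, ‖ψ (ξ l)‖ ≤ P) (hP : 0 ≤ P) (hL : 1 ≤ L) (hR : 2 * H ≤ R)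
    (hH : H = Fintype.card ι * H₁) {s : Multiset S}
    (hzero : ∀ u : Multiset S, u.card < s.card → ∀ h : ι → ℕ, (∀ j, h j < H) →
      D.value H ξ u h = 0) {h : ι → ℕ} (hh : ∀ j, h j < H) :
    ‖ψ (D.value H ξ s h)‖ ≤ D.bound ^ (L * H) * (D.bound ^ s.card * (s.card.factorial *
      ((2 * H / R) ^ (H₁ * s.card) * (L ^ Fintype.card ι * (P * (D.bound * L) ^ s.card *
        Real.exp (D.bound * L * (Fintype.card ι * H + R))))))) := by
  have hA := D.one_le_bound
  have hY (j : ι) : latticeForm (L := L) (D.Φ j) =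
      ∑ σ, D.v j σ • latticeForm fun i ↦ ψ (D.x σ i) := by
    ext l
    simp [D.Φ_eq_sum, latticeForm_sum_smul]
  have hX (σ : S) : latticeForm (L := L) (fun i ↦ ψ (D.x σ i)) =
      ∑ j, D.c σ j • latticeForm (D.Φ j) := by
    ext l
    simp [D.x_eq_sum, latticeForm_sum_smul]
  have hzero' (u : Multiset S) (hu : u.card < s.card) (h : ι → ℕ) (hh : ∀ j, h j < H) :
      expSum (fun j ↦ latticeForm (L := L) (D.Φ j)) (h ·) ((fun l ↦ ψ (ξ l)) *
        (u.map fun σ ↦ latticeForm fun i ↦ ψ (D.x σ i)).prod) = 0 := by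
    have hvalue := D.map_value ξ u hh
    rw [hzero u hu h hh, map_zero, eq_comm, mul_eq_zero] at hvalue
    exact hvalue.resolve_left (pow_ne_zero _ D.map_den_ne_zero)
  rw [D.map_value ξ s hh, norm_mul]
  gcongr
  · exact D.norm_map_den_pow_le
  · simpa [mul_assoc] using norm_expSum_word_le_of_basis_change hY hX D.sum_norm_c_le
      (fun j l ↦ norm_latticeForm_le (D.sum_norm_Φ_le j) l) hξ hP
      (one_le_mul_of_one_le_of_one_le hA (mod_cast hL)) hR hH hzero' hh

end

lemma exists_siegel_value_eq_zero (F : Type*) [Field F] [NumberField F] (S ι : Type*) [Fintype S]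
    [Fintype ι] [DecidableEq ι] : ∃ c : ℝ, ∀ {ψ : 𝓞 F →+* ℂ} (D : InterpolationData ψ S ι)
      {L H T : ℕ}, 1 ≤ L → 2 * (T ^ Fintype.card S * H ^ Fintype.card ι) ≤ L ^ Fintype.card ι →
      ∃ ξ : (ι → Fin L) → 𝓞 F, ξ ≠ 0 ∧
        (∀ s : Multiset S, s.card < T → ∀ h : ι → ℕ, (∀ j, h j < H) → D.value H ξ s h = 0) ∧
        ∀ (φ : F →+* ℂ) l, ‖φ (ξ l)‖ ≤ c * (L ^ Fintype.card ι *
          ((D.bound * L) ^ (Fintype.card S * T) * D.bound ^ (L * H))) := by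
  classical
  obtain ⟨c, hsiegel⟩ := exists_siegel_solution F
  refine ⟨c, fun {ψ} D L H T hL hcount ↦ ?_⟩
  have : NeZero L := ⟨by omega⟩
  have hA := D.one_le_bound
  have hAL : 1 ≤ D.bound * L := one_le_mul_of_one_le_of_one_le hA (mod_cast hL)
  let word (e : S → Fin T) : Multiset S := ∑ σ, (e σ : ℕ) • {σ}
  have hword (e : S → Fin T) : (word e).card ≤ Fintype.card S * T := by
    simpa only [word, Multiset.card_sum, Multiset.card_nsmul, Multiset.card_singleton,
      smul_eq_mul, mul_one, Finset.card_univ] using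
      Finset.univ.sum_le_card_nsmul (fun σ ↦ (e σ : ℕ)) T fun σ _ ↦ (e σ).2.le
  obtain ⟨ξ, hξ, hsolution, hhouse⟩ := hsiegel
    (Matrix.of fun (r : (S → Fin T) × (ι → Fin H)) (l : ι → Fin L) ↦
      ((word r.1).map fun σ ↦ latticeForm (D.x σ) l).prod * D.expMonomial H (fun j ↦ r.2 j) l)
    (one_le_mul_of_one_le_of_one_le (one_le_pow₀ hAL (n := Fintype.card S * T))
      (one_le_pow₀ hA (n := L * H)))
    (by simpa using hcount)
    (fun r l ↦ (canonicalEmbedding.norm_le_iff _ _).2 fun φ ↦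
      (D.norm_map_word_mul_expMonomial_le (φ.comp (algebraMap (𝓞 F) F)) _
        (fun j ↦ (r.2 j).2) l).trans (by gcongr; exact hword r.1))
  refine ⟨ξ, hξ, fun s hs h hh ↦ ?_, fun φ l ↦ ?_⟩
  · have hs' : word (fun σ ↦ ⟨s.count σ, (s.count_le_card σ).trans_lt hs⟩) = s := by
      ext σ
      simp [word, Multiset.count_sum', Multiset.count_singleton]
    simpa [Matrix.mulVec, dotProduct, hs', value, mul_comm] using
      congr_fun hsolution (fun σ ↦ ⟨s.count σ, (s.count_le_card σ).trans_lt hs⟩,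
        fun j ↦ ⟨h j, hh j⟩)
  · simpa using (norm_embedding_le_house (ξ l : F) φ).trans (hhouse l)

variable {F : Type*} [Field F] [NumberField F] {ψ : F →+* ℂ} {S ι : Type*} [Fintype S] [Fintype ι]
  (D : InterpolationData (ψ.comp (algebraMap (𝓞 F) F)) S ι)

lemma one_le_of_dominates [DecidableEq ι] [Nonempty ι] {L H₁ : ℕ} {ξ : (ι → Fin L) → 𝓞 F} {P : ℝ}
    (hξ : ∀ (φ : F →+* ℂ) l, ‖φ (ξ l)‖ ≤ P) {s : Multiset S} {h : ι → ℕ}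
    (hP : P ≤ (s.card : ℝ) ^ ((2 * Fintype.card ι + 3) * s.card))
    (hτ : Dominates s.card (Fintype.card ι) L (Fintype.card ι * H₁) D.bound)
    (hh : ∀ j, h j < Fintype.card ι * H₁) (hne : D.value (Fintype.card ι * H₁) ξ s h ≠ 0)
    (hmin : ∀ u : Multiset S, u.card < s.card → ∀ h : ι → ℕ, (∀ j, h j < Fintype.card ι * H₁) →
      D.value (Fintype.card ι * H₁) ξ u h = 0) :
    1 ≤ (s.card : ℝ) ^ ((2 * Fintype.card ι + 10) * s.card) *
        (2 * (Fintype.card ι * H₁ : ℕ) * L / s.card : ℝ) ^ (H₁ * s.card) *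
      ((s.card : ℝ) ^ ((2 * Fintype.card ι + 7) * s.card)) ^ (Module.finrank ℚ F - 1) := by
  have : NeZero L := ⟨by have := hτ.one_le_degree; omega⟩
  have hL : (0 : ℝ) < L := mod_cast hτ.one_le_degree
  have hP₀ : 0 ≤ P := (norm_nonneg _).trans (hξ ψ 0)
  have hR : 2 * ((Fintype.card ι * H₁ : ℕ) : ℝ) ≤ s.card / L := by
    rw [le_div_iff₀ hL]
    exact_mod_cast hτ.mul_le
  refine (one_le_norm_mul_pow ψ hne fun φ ↦
    (D.norm_map_value_le (φ.comp (algebraMap (𝓞 F) F)) (hξ φ) s hh).trans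
      (hτ.conjugate_le hP₀ hP)).trans ?_
  gcongr
  refine (D.norm_map_value_le_of_forall_value_eq_zero (hξ ψ) hP₀ hτ.one_le_degree hR rfl hmin
    hh).trans ?_
  rw [div_div_eq_mul_div]
  exact hτ.analytic_le hP₀ hP (by positivity)

include D in
lemma card_le_card {σ₀ : S} (hx : LinearIndependent ℤ (D.x σ₀)) :
    Fintype.card ι ≤ Fintype.card S := by
  classical
  by_contra! hcard
  have : Nonempty ι := Fintype.card_pos_iff.1 (by omega)
  obtain ⟨c, hsiegel⟩ := exists_siegel_value_eq_zero F S ι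
  obtain ⟨m, hm⟩ := Nat.exists_eq_succ_of_ne_zero (Module.finrank_pos (R := ℚ) (M := F)).ne'
  let e := 2 * Fintype.card ι + 10
  let H₁ := 2 * Fintype.card ι * (e * (m + 1) + 1)
  have hH : 1 ≤ Fintype.card ι * H₁ := Nat.mul_pos (by omega) (by positivity)
  obtain ⟨L, T, hL, hBT, hLT, hcount, hgain⟩ := exists_parameters (d := Fintype.card ι) (by omega)
    hH (max c (Real.exp (D.bound * (Fintype.card ι + 1))))
  have hT : 0 < T := lt_of_lt_of_le (Nat.mul_pos (by omega) hL) hLT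
  obtain ⟨ξ, hξ, hzero, hP⟩ := hsiegel D hL <| hcount.trans' <|
    Nat.mul_le_mul_left 2 <| Nat.mul_le_mul_right _ <| Nat.pow_le_pow_right hT (by omega)
  obtain ⟨s, h, hh, hne, hmin⟩ := D.exists_minimal_value_ne_zero hx hξ hH
  have hTs : T ≤ s.card := not_lt.1 fun hs ↦ hne (hzero s hs h hh)
  have hBs := hBT.trans (Nat.cast_le.2 hTs)
  have hτ : Dominates s.card (Fintype.card ι) L (Fintype.card ι * H₁) D.bound :=
    ⟨D.one_le_bound, hL, hH, hLT.trans hTs, (le_max_right _ _).trans hBs⟩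
  have hlarge := D.one_le_of_dominates hP
    (hτ.coefficient_le hcard.le hTs ((le_max_left _ _).trans hBs)) hτ hh hne hmin
  refine (pow_mul_pow_mul_pow_lt_one (e := e) (m := m) hτ.one_lt (by positivity)
    (hgain s.card hTs) (hT.trans_le hTs).ne').not_ge (hlarge.trans ?_)
  have := hτ.one_lt.le
  rw [hm, Nat.succ_sub_one]
  gcongr
  omega

end InterpolationData

end Interpolation

section Criterion

open NumberField Filter Complex

variable {S ι : Type*} [Fintype S] [Fintype ι]

lemma card_le_card_of_map_eq_exp {F : Type*} [Field F] [NumberField F] (ψ : F →+* ℂ)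
    {x : S → ι → 𝓞 F} {a : ι → ι → F} {Φ : ι → ι → ℂ} (hΦ : ∀ j i, ψ (a j i) = cexp (Φ j i))
    (hspan : Submodule.span ℂ (Set.range fun σ i ↦ ψ (x σ i)) = Submodule.span ℂ (Set.range Φ))
    {σ₀ : S} (hx : LinearIndependent ℤ (x σ₀)) : Fintype.card ι ≤ Fintype.card S := by
  obtain ⟨q, hq⟩ := IsLocalization.exist_integer_multiples_of_finite (nonZeroDivisors (𝓞 F))
    fun r : ι × ι ↦ a r.1 r.2
  choose num hnum using hq
  have hΦx (j : ι) := (Submodule.mem_span_range_iff_exists_fun ℂ).1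
    (hspan.ge (Submodule.subset_span (Set.mem_range_self j)))
  have hxΦ (σ : S) := (Submodule.mem_span_range_iff_exists_fun ℂ).1
    (hspan.le (Submodule.subset_span (Set.mem_range_self σ)))
  choose v hv using hΦx
  choose c hc using hxΦ
  have : Finite (𝓞 F →+* ℂ) := .of_equiv _ (RingHom.equivIntAlgHom ..).symm
  obtain ⟨A, hA, hxA, hΦA, hcA, hnumA⟩ := ((eventually_ge_atTop (1 : ℝ)).and <|
    (eventually_all.2 fun φ : 𝓞 F →+* ℂ ↦ eventually_all.2 fun σ ↦
      eventually_ge_atTop (∑ i, ‖φ (x σ i)‖)).and <|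
    (eventually_all.2 fun j ↦ eventually_ge_atTop (∑ i, ‖Φ j i‖)).and <|
    (eventually_all.2 fun σ ↦ eventually_ge_atTop (∑ j, ‖c σ j‖)).and <|
    eventually_all.2 fun φ : 𝓞 F →+* ℂ ↦
      eventually_ge_atTop (∏ j, ∏ i, max ‖φ (num (j, i))‖ ‖φ q‖)).exists
  let D : InterpolationData (ψ.comp (algebraMap (𝓞 F) F)) S ι :=
    { x := x
      Φ := Φ
      num := fun j i ↦ num (j, i)
      den := q
      map_den_ne_zero := by simp
      map_num := fun j i ↦ by
        rw [RingHom.comp_apply, hnum, Algebra.smul_def, map_mul, hΦ, RingHom.comp_apply]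
      v := v
      c := c
      Φ_eq_sum := fun j ↦ (hv j).symm
      x_eq_sum := fun σ ↦ (hc σ).symm
      bound := A
      one_le_bound := hA
      sum_norm_x_le := hxA
      sum_norm_Φ_le := hΦA
      sum_norm_c_le := hcA
      prod_norm_num_den_le := hnumA }
  exact D.card_le_card hx

lemma numberField_adjoin {s : Set ℂ} (hs : s.Finite) (halg : ∀ z ∈ s, IsAlgebraic ℚ z) :
    NumberField (IntermediateField.adjoin ℚ s) := by
  have := hs.to_subtype
  have : FiniteDimensional ℚ (IntermediateField.adjoin ℚ s) :=
    IntermediateField.finiteDimensional_adjoin fun z hz ↦ (halg z hz).isIntegral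
  exact { }

lemma card_le_card_of_isAlgebraic_exp {x : S → ι → ℂ} {Φ : ι → ι → ℂ}
    (hx : ∀ σ i, IsIntegral ℤ (x σ i)) (hΦ : ∀ j i, IsAlgebraic ℚ (cexp (Φ j i)))
    (hspan : Submodule.span ℂ (Set.range x) = Submodule.span ℂ (Set.range Φ))
    {σ₀ : S} (hli : LinearIndependent ℤ (x σ₀)) : Fintype.card ι ≤ Fintype.card S := by
  let s : Set ℂ := Set.range (fun r : S × ι ↦ x r.1 r.2) ∪
    Set.range fun r : ι × ι ↦ cexp (Φ r.1 r.2)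
  let F := IntermediateField.adjoin ℚ s
  have : NumberField F := by
    refine numberField_adjoin ((Set.finite_range _).union (Set.finite_range _)) ?_
    rintro _ (⟨r, rfl⟩ | ⟨r, rfl⟩)
    · exact (hx r.1 r.2).tower_top.isAlgebraic
    · exact hΦ r.1 r.2
  have hxF (σ : S) (i : ι) : x σ i ∈ F := IntermediateField.subset_adjoin ℚ s (.inl ⟨(σ, i), rfl⟩)
  have hΦF (j i : ι) : cexp (Φ j i) ∈ F := IntermediateField.subset_adjoin ℚ s (.inr ⟨(j, i), rfl⟩)
  let x' (σ : S) (i : ι) : 𝓞 F := ⟨⟨x σ i, hxF σ i⟩,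
    (isIntegral_algHom_iff (F.val.restrictScalars ℤ) F.val.injective).1 (hx σ i)⟩
  exact card_le_card_of_map_eq_exp (algebraMap F ℂ) (x := x') (a := fun j i ↦ ⟨_, hΦF j i⟩)
    (fun _ _ ↦ rfl) hspan
    (.of_comp ((Algebra.linearMap F ℂ).restrictScalars ℤ ∘ₗ
      (Algebra.linearMap (𝓞 F) F).restrictScalars ℤ) (v := x' σ₀) hli)

end Criterion

section LinearForms

open NumberField Complex

/-- The logarithms of the nonzero algebraic numbers. -/
def algebraicLogs : Submodule ℚ ℂ where
  carrier := {z | IsAlgebraic ℚ (cexp z)}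
  zero_mem' := by simpa using isAlgebraic_one
  add_mem' {z w} hz hw := by
    rw [Set.mem_ofPred_eq, exp_add]
    exact hz.mul hw
  smul_mem' q z hz := by
    refine IsAlgebraic.of_pow q.den_pos ?_
    rw [← exp_nat_mul, Rat.smul_def, ← mul_assoc, mul_comm (q.den : ℂ), ← Rat.cast_natCast,
      ← Rat.cast_mul, Rat.mul_den_eq_num, Rat.cast_intCast, exp_int_mul]
    exact mem_algebraicClosure_iff.1 (zpow_mem (mem_algebraicClosure_iff.2 hz) _)

variable {K : Type*} [Field K] [NumberField K] {J : Type*} [Fintype J]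

lemma ratCast_trace_eq_sum_embeddings (y : K) :
    ((Algebra.trace ℚ K y : ℚ) : ℂ) = ∑ σ : K →+* ℂ, σ y := by
  rw [← eq_ratCast (algebraMap ℚ ℂ), trace_eq_sum_embeddings ℂ,
    ← Equiv.sum_comp (RingHom.equivRatAlgHom K ℂ)]
  rfl

/-- The linear form `∑ j, σ (β j) * l j` obtained from `∑ j, β j * l j` by conjugating its
coefficients. -/
def conjugateForm (β : J → K) (l : J → ℂ) (σ : K →+* ℂ) : ℂ :=
  ∑ j, σ (β j) * l j

lemma sum_conjugateForm_mul (β : J → K) (l : J → ℂ) (y : K) :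
    ∑ σ, conjugateForm β l σ * σ y = ∑ j, Algebra.trace ℚ K (y * β j) • l j := by
  simp only [conjugateForm, Rat.smul_def, ratCast_trace_eq_sum_embeddings, Finset.sum_mul]
  rw [Finset.sum_comm]
  refine Finset.sum_congr rfl fun j _ ↦ Finset.sum_congr rfl fun σ _ ↦ ?_
  rw [map_mul, mul_right_comm, mul_comm (σ y)]

lemma sum_conjugateForm_mul_mem_algebraicLogs (β : J → K) {l : J → ℂ}
    (hl : ∀ j, l j ∈ algebraicLogs) (y : K) :
    ∑ σ, conjugateForm β l σ * σ y ∈ algebraicLogs := by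
  rw [sum_conjugateForm_mul]
  exact Submodule.sum_mem _ fun j _ ↦ Submodule.smul_mem _ _ (hl j)

lemma exists_conjugateForm_ne_zero {β : J → K} (hβ : β ≠ 0) {l : J → ℂ}
    (hl : LinearIndependent ℚ l) : ∃ σ, conjugateForm β l σ ≠ 0 := by
  obtain ⟨j, hj⟩ := Function.ne_iff.1 hβ
  by_contra! hzero
  have htrace := sum_conjugateForm_mul β l (β j)⁻¹
  simp only [hzero, zero_mul, Finset.sum_const_zero] at htrace
  have hone := Fintype.linearIndependent_iff.1 hl _ htrace.symm j
  rw [inv_mul_cancel₀ hj, ← map_one (algebraMap ℚ K), Algebra.trace_algebraMap] at hone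
  simp [Module.finrank_pos.ne'] at hone

/-- The images under `σ` of the elements of an integral basis of `K`. -/
noncomputable def conjugateBasis (σ : K →+* ℂ) (i : Module.Free.ChooseBasisIndex ℤ (𝓞 K)) : ℂ :=
  σ (RingOfIntegers.basis K i)

lemma isIntegral_conjugateBasis (σ : K →+* ℂ) (i) : IsIntegral ℤ (conjugateBasis σ i) :=
  map_isIntegral_int σ (RingOfIntegers.isIntegral_coe _)

lemma linearIndependent_conjugateBasis (σ : K →+* ℂ) : LinearIndependent ℤ (conjugateBasis σ) :=
  (RingOfIntegers.basis K).linearIndependent.map'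
    ((σ.comp (algebraMap (𝓞 K) K)).toIntAlgHom.toLinearMap)
    (LinearMap.ker_eq_bot.2 (σ.injective.comp RingOfIntegers.coe_injective))

lemma exists_sum_mul_conjugateBasis_eq_single [DecidableEq (K →+* ℂ)] (σ : K →+* ℂ) :
    ∃ b : Module.Free.ChooseBasisIndex ℤ (𝓞 K) → ℂ,
      ∀ τ, ∑ j, b j * conjugateBasis τ j = if τ = σ then 1 else 0 := by
  refine ⟨(canonicalEmbedding.latticeBasis K).repr (Pi.single σ 1), fun τ ↦ ?_⟩
  have hrepr := congr_fun ((canonicalEmbedding.latticeBasis K).sum_repr (Pi.single σ 1)) τ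
  simpa [conjugateBasis, Pi.single_apply, integralBasis_apply] using hrepr

/-- The matrix `∑ σ, w σ * σ (ω j * ω i)`, where `ω` is an integral basis of `K`. -/
noncomputable def weightedTraceMatrix (w : (K →+* ℂ) → ℂ)
    (j i : Module.Free.ChooseBasisIndex ℤ (𝓞 K)) : ℂ :=
  ∑ σ, w σ * σ (RingOfIntegers.basis K j * RingOfIntegers.basis K i)

lemma weightedTraceMatrix_eq_sum (w : (K →+* ℂ) → ℂ) (j) :
    weightedTraceMatrix w j = ∑ σ, (w σ * conjugateBasis σ j) • conjugateBasis σ := by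
  ext i
  simp [weightedTraceMatrix, conjugateBasis, mul_assoc]

lemma span_range_weightedTraceMatrix (w : (K →+* ℂ) → ℂ) :
    Submodule.span ℂ (Set.range (weightedTraceMatrix w)) =
      Submodule.span ℂ (Set.range fun σ : {σ // w σ ≠ 0} ↦ conjugateBasis σ.1) := by
  classical
  refine le_antisymm (Submodule.span_le.2 ?_) (Submodule.span_le.2 ?_)
  · rintro _ ⟨j, rfl⟩
    rw [weightedTraceMatrix_eq_sum]
    refine Submodule.sum_mem _ fun σ _ ↦ ?_
    by_cases hσ : w σ = 0
    · simp [hσ]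
    · exact Submodule.smul_mem _ _ (Submodule.subset_span ⟨⟨σ, hσ⟩, rfl⟩)
  · rintro _ ⟨⟨σ, hσ⟩, rfl⟩
    obtain ⟨b, hb⟩ := exists_sum_mul_conjugateBasis_eq_single σ
    have hdual : ∑ j, b j • weightedTraceMatrix w j = w σ • conjugateBasis σ := by
      calc ∑ j, b j • weightedTraceMatrix w j
          = ∑ τ, (w τ * ∑ j, b j * conjugateBasis τ j) • conjugateBasis τ := by
            simp only [weightedTraceMatrix_eq_sum, Finset.smul_sum, Finset.mul_sum,
              Finset.sum_smul, smul_smul]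
            rw [Finset.sum_comm]
            simp only [mul_left_comm]
        _ = w σ • conjugateBasis σ := by simp [hb]
    refine (Submodule.smul_mem_iff _ hσ).1 (hdual ▸ ?_)
    exact Submodule.sum_mem _ fun j _ ↦
      Submodule.smul_mem _ _ (Submodule.subset_span (Set.mem_range_self j))

theorem eq_zero_of_conjugateForm_eq_zero (φ : K →+* ℂ) {β : J → K} {l : J → ℂ}
    (hli : LinearIndependent ℚ l) (hl : ∀ j, l j ∈ algebraicLogs)
    (hφ : conjugateForm β l φ = 0) : β = 0 := by
  classical
  by_contra hβ
  obtain ⟨σ₀, hσ₀⟩ := exists_conjugateForm_ne_zero hβ hli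
  let S := {σ : K →+* ℂ // conjugateForm β l σ ≠ 0}
  have hS : Fintype.card S < Fintype.card (K →+* ℂ) :=
    Fintype.card_subtype_lt (x := φ) (not_not.2 hφ)
  have hcard : Fintype.card (Module.Free.ChooseBasisIndex ℤ (𝓞 K)) ≤ Fintype.card S :=
    card_le_card_of_isAlgebraic_exp (fun σ ↦ isIntegral_conjugateBasis σ.1)
      (fun j i ↦ sum_conjugateForm_mul_mem_algebraicLogs β hl _)
      (span_range_weightedTraceMatrix (conjugateForm β l)).symm (σ₀ := ⟨σ₀, hσ₀⟩)
      (linearIndependent_conjugateBasis σ₀)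
  rw [Embeddings.card K ℂ, Module.finrank_eq_card_basis (integralBasis K)] at hS
  exact hcard.not_gt hS

theorem linearIndependent_algebraicClosure_of_rat {J : Type*} {l : J → ℂ}
    (hli : LinearIndependent ℚ l) (hl : ∀ j, l j ∈ algebraicLogs) :
    LinearIndependent (algebraicClosure ℚ ℂ) l := by
  rw [linearIndependent_iff_finset_linearIndependent]
  intro s
  rw [Fintype.linearIndependent_iff]
  intro g hg
  have hrange : (Set.range fun j ↦ (g j : ℂ)).Finite := Set.finite_range _
  have := numberField_adjoin hrange (by
    rintro _ ⟨j, rfl⟩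
    exact mem_algebraicClosure_iff.1 (g j).2)
  let β (j : s) : IntermediateField.adjoin ℚ (Set.range fun j ↦ (g j : ℂ)) :=
    ⟨g j, IntermediateField.subset_adjoin ℚ _ ⟨j, rfl⟩⟩
  have hβ : β = 0 := eq_zero_of_conjugateForm_eq_zero (algebraMap _ ℂ)
    (hli.comp _ Subtype.val_injective) (fun j ↦ hl j) hg
  exact fun j ↦ Subtype.ext congr(($hβ j : ℂ))

end LinearForms

section Ranks

open Complex

lemma two_pi_mul_I_mem_algebraicLogs : 2 * Real.pi * I ∈ algebraicLogs := by
  change IsAlgebraic ℚ (cexp _)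
  rw [exp_two_pi_mul_I]
  exact isAlgebraic_one

lemma finrank_span_algebraicClosure_eq_rat {T : Set ℂ} (hT : T ⊆ algebraicLogs) :
    Module.finrank (algebraicClosure ℚ ℂ) (Submodule.span (algebraicClosure ℚ ℂ) T) =
      Module.finrank ℚ (Submodule.span ℚ T) := by
  obtain ⟨b, hbT, hspan, hli⟩ := exists_linearIndependent ℚ T
  have hli' := linearIndependent_algebraicClosure_of_rat hli fun z ↦ hT (hbT z.2)
  have hspan' : Submodule.span (algebraicClosure ℚ ℂ) T =
      Submodule.span (algebraicClosure ℚ ℂ) b := by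
    rw [← Submodule.span_span_of_tower ℚ, ← hspan, Submodule.span_span_of_tower]
  have hfinrank {R : Type} [Semiring R] [StrongRankCondition R] [Module R ℂ]
      (h : LinearIndependent R ((↑) : b → ℂ)) :
      Module.finrank R (Submodule.span R b) = Nat.card b := by
    rw [← Module.finrank_eq_nat_card_basis (Module.Basis.span h), Subtype.range_coe]
  rw [hspan', ← hspan, hfinrank hli, hfinrank hli']

lemma finrank_span_eq_of_isFractionRing (R K : Type*) [CommRing R] [CommRing K] [Algebra R K]
    [IsFractionRing R K] {V : Type*} [AddCommGroup V] [Module R V] [Module K V]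
    [IsScalarTower R K V] (T : Set V) :
    Module.finrank K (Submodule.span K T) = Module.finrank R (Submodule.span R T) := by
  have := isLocalizedModule_id (nonZeroDivisors R) V K
  have hspan := Submodule.localized'_span K (nonZeroDivisors R) (LinearMap.id (R := R) (M := V)) T
  rw [LinearMap.id_coe, Set.image_id] at hspan
  rw [← hspan, IsFractionRing.finrank_right_eq R K, IsLocalizedModule.finrank_eq (nonZeroDivisors R)
    ((Submodule.span R T).toLocalized' K (nonZeroDivisors R) LinearMap.id) le_rfl]

lemma finrank_map_add_finrank_ker {M N : Type*} [AddCommGroup M] [AddCommGroup N] (f : M →ₗ[ℤ] N)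
    {p : Submodule ℤ M} [Module.Finite ℤ p] (hp : LinearMap.ker f ≤ p) :
    Module.finrank ℤ (p.map f) + Module.finrank ℤ (LinearMap.ker f) = Module.finrank ℤ p := by
  rw [← (LinearMap.ker (f.domRestrict p)).finrank_quotient_add_finrank,
    (f.domRestrict p).quotKerEquivRange.finrank_eq, LinearMap.range_domRestrict,
    LinearMap.ker_domRestrict, (Submodule.comapSubtypeEquivOfLe hp).finrank_eq]

/-- The exponential, as a homomorphism from `ℂ` onto the multiplicative group written
additively. -/
noncomputable def expUnits : ℂ →ₗ[ℤ] Additive ℂˣ :=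
  (MonoidHom.toAdditiveRight expMonoidHom.toHomUnits).toIntLinearMap

lemma expUnits_eq_ofMul {z : ℂ} {u : ℂˣ} : expUnits z = .ofMul u ↔ cexp z = u :=
  Units.ext_iff

lemma ker_expUnits : LinearMap.ker expUnits = Submodule.span ℤ {2 * Real.pi * I} := by
  ext z
  rw [LinearMap.mem_ker, ← ofMul_one, expUnits_eq_ofMul, Units.val_one, exp_eq_one_iff,
    Submodule.mem_span_singleton]
  simp [eq_comm]

lemma map_expUnits_span {ι : Type*} {l : ι → ℂ} {u : ι → ℂˣ} (hl : ∀ i, cexp (l i) = u i) :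
    (Submodule.span ℤ (insert (2 * Real.pi * I) (Set.range l))).map expUnits =
      AddSubgroup.toIntSubmodule (Subgroup.closure (Set.range u)).toAddSubgroup := by
  have himage : expUnits '' Set.range l = Additive.toMul ⁻¹' Set.range u := by
    rw [← Set.range_comp, ← Equiv.image_symm_eq_preimage, ← Set.range_comp]
    exact congrArg Set.range (funext fun i ↦ expUnits_eq_ofMul.2 (hl i))
  have hzero : expUnits (2 * Real.pi * I) = 0 := expUnits_eq_ofMul.2 (by simp)
  rw [Submodule.map_span, Set.image_insert_eq, hzero, Submodule.span_insert_zero, himage,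
    Subgroup.toAddSubgroup_closure, AddSubgroup.toIntSubmodule_closure]

lemma finrank_span_int_logs {ι : Type*} [Finite ι] {l : ι → ℂ} {u : ι → ℂˣ}
    (hl : ∀ i, cexp (l i) = u i) :
    Module.finrank ℤ (Submodule.span ℤ (insert (2 * Real.pi * I) (Set.range l))) =
      Module.finrank ℤ (Additive (Subgroup.closure (Set.range u))) + 1 := by
  have : Module.Finite ℤ (Submodule.span ℤ (insert (2 * Real.pi * I) (Set.range l))) :=
    .span_of_finite ℤ ((Set.finite_range l).insert _)
  rw [← finrank_map_add_finrank_ker expUnits, map_expUnits_span hl, ker_expUnits,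
    ← (LinearEquiv.toSpanNonzeroSingleton ℤ _ _ two_pi_I_ne_zero).finrank_eq, Module.finrank_self]
  · rfl
  · rw [ker_expUnits]
    exact Submodule.span_mono (by simp)

end Ranks

end Baker

theorem baker_dim_span_logs_general {ι : Type*} [Finite ι] (l : ι → ℂ) (u : ι → ℂˣ)
    (hl : ∀ i, Complex.exp (l i) = u i) (hu : ∀ i, IsAlgebraic ℚ (u i : ℂ)) :
    Module.finrank (algebraicClosure ℚ ℂ)
        (Submodule.span (algebraicClosure ℚ ℂ) (insert (2 * Real.pi * Complex.I) (Set.range l))) =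
      Module.finrank ℚ (ℚ ⊗[ℤ] Additive (Subgroup.closure (Set.range u))) + 1 := by
  rw [(TensorProduct.isBaseChange ℤ _ ℚ).finrank_eq, Baker.finrank_span_algebraicClosure_eq_rat,
    Baker.finrank_span_eq_of_isFractionRing ℤ ℚ, Baker.finrank_span_int_logs hl]
  rintro _ (rfl | ⟨i, rfl⟩)
  · exact Baker.two_pi_mul_I_mem_algebraicLogs
  · change IsAlgebraic ℚ (Complex.exp (l i))
    rw [hl]
    exact hu i

set_option synthInstance.maxHeartbeats 400000 in

/-- Baker's theorem on linear forms in logarithms, in the reformulation of Huber–Wüstholz: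
for nonzero algebraic numbers `α₁, …, αₙ`, the dimension over `ℚ̄` (the algebraic closure
of `ℚ` in `ℂ`) of the `ℚ̄`-linear span of `2πi, log α₁, …, log αₙ` minus `1` equals the
rank of the multiplicative subgroup of `ℂˣ` generated by `α₁, …, αₙ`, that is, the
`ℚ`-dimension of that group tensored with `ℚ`. -/
theorem baker_dim_span_logs
    (n : ℕ) (α : Fin n → ℂ) (h0 : ∀ i, α i ≠ 0) (halg : ∀ i, IsAlgebraic ℚ (α i)) :
    Module.finrank (algebraicClosure ℚ ℂ)
        (Submodule.span (algebraicClosure ℚ ℂ)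
          (insert (2 * Real.pi * Complex.I)
            (Set.range fun i => Complex.log (α i)))) - 1 =
      Module.finrank ℚ
        (ℚ ⊗[ℤ] Additive (Subgroup.closure (Set.range fun i => Units.mk0 (α i) (h0 i)))) := by
  rw [baker_dim_span_logs_general (fun i ↦ Complex.log (α i))
    (fun i ↦ Units.mk0 (α i) (h0 i)) (fun i ↦ Complex.exp_log (h0 i)) halg, Nat.add_sub_cancel]
end
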